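/- arXiv:1603.09218 — 2 statements merged into one kernel-verified Lean document; each statement's English description precedes it below -/
import Mathlib

section
/- The family of elements e(Y₁+Y₂)^{a₁}(Y₁Y₂)^{a₂}(t⁻²Y₁X₁+Y₂X₂)^{ε}(X₁+X₂)^{b₁}(X₁X₂)^{b₂}e, with ε ∈ {0,1}, a₁, b₁ ∈ ℕ₀ and a₂, b₂ ∈ ℤ (negative exponents interpreted via the inverse generators), is a ℂ-vector-space basis of the spherical double affine Hecke algebra eH_{t,q}e. -/
noncomputable section

/-- Generators of the double affine Hecke algebra of type GL₂:
`T, T⁻¹, X₁, X₁⁻¹, X₂, X₂⁻¹, Y₁, Y₁⁻¹, Y₂, Y₂⁻¹`. -/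
inductive DGen : Type
  | T | Ti | X1 | X1i | X2 | X2i | Y1 | Y1i | Y2 | Y2i

abbrev FD : Type := FreeAlgebra ℂ DGen

def gD : DGen → FD := FreeAlgebra.ι ℂ

/-- The defining relations of the double affine Hecke algebra `H_{t,q}` of type GL₂. -/
inductive DRel (q t : ℂ) : FD → FD → Prop
  | TTi : DRel q t (gD .T * gD .Ti) 1
  | TiT : DRel q t (gD .Ti * gD .T) 1
  | X1X1i : DRel q t (gD .X1 * gD .X1i) 1
  | X1iX1 : DRel q t (gD .X1i * gD .X1) 1
  | X2X2i : DRel q t (gD .X2 * gD .X2i) 1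
  | X2iX2 : DRel q t (gD .X2i * gD .X2) 1
  | Y1Y1i : DRel q t (gD .Y1 * gD .Y1i) 1
  | Y1iY1 : DRel q t (gD .Y1i * gD .Y1) 1
  | Y2Y2i : DRel q t (gD .Y2 * gD .Y2i) 1
  | Y2iY2 : DRel q t (gD .Y2i * gD .Y2) 1
  | TX1T : DRel q t (gD .T * gD .X1 * gD .T) (gD .X2)
  | TiY1Ti : DRel q t (gD .Ti * gD .Y1 * gD .Ti) (gD .Y2)
  | Xcomm : DRel q t (gD .X1 * gD .X2) (gD .X2 * gD .X1)
  | Ycomm : DRel q t (gD .Y1 * gD .Y2) (gD .Y2 * gD .Y1)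
  | YXX : DRel q t (gD .Y1 * (gD .X1 * gD .X2)) ((q ^ 2) • (gD .X1 * gD .X2 * gD .Y1))
  | X1iY2 : DRel q t (gD .X1i * gD .Y2) (gD .Y2 * gD .X1i * gD .Ti * gD .Ti)
  | hecke : DRel q t ((gD .T + algebraMap ℂ FD t⁻¹) * (gD .T - algebraMap ℂ FD t)) 0

/-- The double affine Hecke algebra `H_{t,q}` of type GL₂. -/
abbrev DAHA (q t : ℂ) : Type := RingQuot (DRel q t)

variable (q t : ℂ)

def T : DAHA q t := RingQuot.mkAlgHom ℂ (DRel q t) (gD .T)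
def Ti : DAHA q t := RingQuot.mkAlgHom ℂ (DRel q t) (gD .Ti)
def X1 : DAHA q t := RingQuot.mkAlgHom ℂ (DRel q t) (gD .X1)
def X1i : DAHA q t := RingQuot.mkAlgHom ℂ (DRel q t) (gD .X1i)
def X2 : DAHA q t := RingQuot.mkAlgHom ℂ (DRel q t) (gD .X2)
def X2i : DAHA q t := RingQuot.mkAlgHom ℂ (DRel q t) (gD .X2i)
def Y1 : DAHA q t := RingQuot.mkAlgHom ℂ (DRel q t) (gD .Y1)
def Y1i : DAHA q t := RingQuot.mkAlgHom ℂ (DRel q t) (gD .Y1i)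
def Y2 : DAHA q t := RingQuot.mkAlgHom ℂ (DRel q t) (gD .Y2)
def Y2i : DAHA q t := RingQuot.mkAlgHom ℂ (DRel q t) (gD .Y2i)

/-- Integer powers of an element `x` with designated inverse `xi`:
negative exponents are interpreted via the inverse generator. -/
def zp {M : Type*} [Monoid M] (x xi : M) : ℤ → M
  | Int.ofNat n => x ^ n
  | Int.negSucc n => xi ^ (n + 1)

/-- The symmetrizing idempotent `e = (1 + tT)/(1 + t²)` of the DAHA. -/
def eSym (q t : ℂ) : DAHA q t := ((1 + t ^ 2)⁻¹ : ℂ) • (1 + t • T q t)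

/-- The spherical subalgebra `eH_{t,q}e`, as the ℂ-submodule of `H_{t,q}` which is
the range of the linear map `x ↦ e·x·e`. -/
def sDAHA (q t : ℂ) : Submodule ℂ (DAHA q t) :=
  LinearMap.range ((LinearMap.mulLeft ℂ (eSym q t)).comp (LinearMap.mulRight ℂ (eSym q t)))

/-- The family `e(Y₁+Y₂)^{a₁}(Y₁Y₂)^{a₂}(t⁻²Y₁X₁+Y₂X₂)^{ε}(X₁+X₂)^{b₁}(X₁X₂)^{b₂}e`,
indexed by `a₁, b₁ ∈ ℕ`, `a₂, b₂ ∈ ℤ`, `ε ∈ {0,1}`. -/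
def pbwSph (q t : ℂ) : ℕ × ℤ × Fin 2 × ℕ × ℤ → DAHA q t :=
  fun x => eSym q t *
    ((Y1 q t + Y2 q t) ^ x.1 * zp (Y1 q t * Y2 q t) (Y1i q t * Y2i q t) x.2.1 *
      ((t⁻¹ ^ 2) • (Y1 q t * X1 q t) + Y2 q t * X2 q t) ^ (x.2.2.1 : ℕ) *
      (X1 q t + X2 q t) ^ x.2.2.2.1 * zp (X1 q t * X2 q t) (X1i q t * X2i q t) x.2.2.2.2) *
    eSym q t



/-! ### Algebra of the relations -/

structure DH {R : Type*} [Ring R] [Algebra ℂ R] (q t : ℂ)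
    (T Ti X1 X1i X2 X2i Y1 Y1i Y2 Y2i : R) : Prop where
  q0 : q ≠ 0
  t0 : t ≠ 0
  t2 : t ^ 2 ≠ -1
  TTi : T * Ti = 1
  TiT : Ti * T = 1
  X1X1i : X1 * X1i = 1
  X1iX1 : X1i * X1 = 1
  X2X2i : X2 * X2i = 1
  X2iX2 : X2i * X2 = 1
  Y1Y1i : Y1 * Y1i = 1
  Y1iY1 : Y1i * Y1 = 1
  Y2Y2i : Y2 * Y2i = 1
  Y2iY2 : Y2i * Y2 = 1
  TX1T : T * X1 * T = X2
  TiY1Ti : Ti * Y1 * Ti = Y2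
  Xcomm : X1 * X2 = X2 * X1
  Ycomm : Y1 * Y2 = Y2 * Y1
  YXX : Y1 * (X1 * X2) = (q ^ 2) • (X1 * X2 * Y1)
  X1iY2 : X1i * Y2 = Y2 * X1i * Ti * Ti
  hecke : (T + algebraMap ℂ R t⁻¹) * (T - algebraMap ℂ R t) = 0

lemma DH_main (q t : ℂ) (hq : q ≠ 0) (ht : t ≠ 0) (ht2 : t ^ 2 ≠ -1) :
    DH q t (T q t) (Ti q t) (X1 q t) (X1i q t) (X2 q t) (X2i q t)
      (Y1 q t) (Y1i q t) (Y2 q t) (Y2i q t) := by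
  have key : ∀ {a b : FD}, DRel q t a b →
      RingQuot.mkAlgHom ℂ (DRel q t) a = RingQuot.mkAlgHom ℂ (DRel q t) b :=
    fun h => RingQuot.mkAlgHom_rel ℂ h
  constructor
  · exact hq
  · exact ht
  · exact ht2
  · simpa [T, Ti, X1, X1i, X2, X2i, Y1, Y1i, Y2, Y2i] using key (.TTi : DRel q t _ _)
  · simpa [T, Ti, X1, X1i, X2, X2i, Y1, Y1i, Y2, Y2i] using key (.TiT : DRel q t _ _)
  · simpa [T, Ti, X1, X1i, X2, X2i, Y1, Y1i, Y2, Y2i] using key (.X1X1i : DRel q t _ _)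
  · simpa [T, Ti, X1, X1i, X2, X2i, Y1, Y1i, Y2, Y2i] using key (.X1iX1 : DRel q t _ _)
  · simpa [T, Ti, X1, X1i, X2, X2i, Y1, Y1i, Y2, Y2i] using key (.X2X2i : DRel q t _ _)
  · simpa [T, Ti, X1, X1i, X2, X2i, Y1, Y1i, Y2, Y2i] using key (.X2iX2 : DRel q t _ _)
  · simpa [T, Ti, X1, X1i, X2, X2i, Y1, Y1i, Y2, Y2i] using key (.Y1Y1i : DRel q t _ _)
  · simpa [T, Ti, X1, X1i, X2, X2i, Y1, Y1i, Y2, Y2i] using key (.Y1iY1 : DRel q t _ _)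
  · simpa [T, Ti, X1, X1i, X2, X2i, Y1, Y1i, Y2, Y2i] using key (.Y2Y2i : DRel q t _ _)
  · simpa [T, Ti, X1, X1i, X2, X2i, Y1, Y1i, Y2, Y2i] using key (.Y2iY2 : DRel q t _ _)
  · simpa [T, Ti, X1, X1i, X2, X2i, Y1, Y1i, Y2, Y2i] using key (.TX1T : DRel q t _ _)
  · simpa [T, Ti, X1, X1i, X2, X2i, Y1, Y1i, Y2, Y2i] using key (.TiY1Ti : DRel q t _ _)
  · simpa [T, Ti, X1, X1i, X2, X2i, Y1, Y1i, Y2, Y2i] using key (.Xcomm : DRel q t _ _)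
  · simpa [T, Ti, X1, X1i, X2, X2i, Y1, Y1i, Y2, Y2i] using key (.Ycomm : DRel q t _ _)
  · have := key (.YXX : DRel q t _ _)
    simpa only [T, Ti, X1, X1i, X2, X2i, Y1, Y1i, Y2, Y2i, map_mul, map_smul] using this
  · simpa [T, Ti, X1, X1i, X2, X2i, Y1, Y1i, Y2, Y2i] using key (.X1iY2 : DRel q t _ _)
  · have := key (.hecke : DRel q t _ _)
    simpa only [T, map_mul, map_add, map_sub, AlgHom.commutes, map_zero] using this

section gen
set_option linter.unusedSectionVars false
variable {R : Type*} [Ring R] [Algebra ℂ R]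

lemma inv_comm' {a b c : R} (h1 : a * b = 1) (h2 : b * a = 1) (h : a * c = c * a) :
    b * c = c * b := by
  calc b * c = b * (c * a) * b := by rw [mul_assoc, mul_assoc, h1, mul_one]
    _ = _ := by rw [← h, ← mul_assoc, h2, one_mul]

lemma sum_comm' {S A B : R} {c : ℂ} (hS : S * S = c • S + 1) (h : S * A * S = B) :
    (A + B) * S = S * (A + B) := by
  have h1 : S * B = c • B + A * S := by
    rw [← h, ← mul_assoc, ← mul_assoc, hS]; simp [add_mul, mul_assoc]
  have h2 : B * S = c • B + S * A := by
    rw [← h, mul_assoc, hS]; simp [mul_add, mul_assoc]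
  rw [add_mul, mul_add, h1, h2]; abel

lemma prod_comm' {S A B : R} (h : S * A * S = B) (hAB : A * B = B * A) :
    (A * B) * S = S * (A * B) := by
  calc A * B * S = B * A * S := by rw [hAB]
    _ = S * A * (S * A * S) := by rw [← h]; simp only [mul_assoc]
    _ = _ := by rw [h, mul_assoc]

lemma adjoin_comm' {s : Set R} {c : R} (h : ∀ a ∈ s, a * c = c * a) {a : R}
    (ha : a ∈ Algebra.adjoin ℂ s) : a * c = c * a := by
  induction ha using Algebra.adjoin_induction with
  | mem x hx => exact h x hx
  | algebraMap r => exact Algebra.commutes r c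
  | add x y _ _ h1 h2 => rw [add_mul, mul_add, h1, h2]
  | mul x y _ _ h1 h2 => rw [mul_assoc, h2, ← mul_assoc, h1, mul_assoc]

/-- the right idealizer of a submodule -/
def rstab (N : Submodule ℂ R) : Subalgebra ℂ R where
  carrier := {r | ∀ n ∈ N, n * r ∈ N}
  mul_mem' {a b} ha hb n hn := by rw [← mul_assoc]; exact hb _ (ha _ hn)
  add_mem' {a b} ha hb n hn := by rw [mul_add]; exact N.add_mem (ha _ hn) (hb _ hn)
  algebraMap_mem' r n hn := by
    rw [← Algebra.commutes, ← Algebra.smul_def]; exact N.smul_mem _ hn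

lemma mem_rstab {N : Submodule ℂ R} {r : R} : r ∈ rstab N ↔ ∀ n ∈ N, n * r ∈ N := Iff.rfl

variable {q t : ℂ} {T Ti X1 X1i X2 X2i Y1 Y1i Y2 Y2i : R}

abbrev symAlg (A B Ai Bi : R) : Subalgebra ℂ R := Algebra.adjoin ℂ {A + B, A * B, Ai * Bi}

lemma symAlg_add (A B Ai Bi : R) : A + B ∈ symAlg A B Ai Bi :=
  Algebra.subset_adjoin (by simp)
lemma symAlg_mul (A B Ai Bi : R) : A * B ∈ symAlg A B Ai Bi :=
  Algebra.subset_adjoin (by simp)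
lemma symAlg_inv (A B Ai Bi : R) : Ai * Bi ∈ symAlg A B Ai Bi :=
  Algebra.subset_adjoin (by simp)

lemma prod_inv' {A B Ai Bi : R} (hA : A * Ai = 1) (hB : B * Bi = 1) (hAB : A * B = B * A) :
    (A * B) * (Ai * Bi) = 1 := by
  calc (A * B) * (Ai * Bi) = B * (A * Ai) * Bi := by rw [hAB]; simp only [mul_assoc]
    _ = 1 := by rw [hA, mul_one, hB]

lemma prod_inv'' {A B Ai Bi : R} (hA : Ai * A = 1) (hB : Bi * B = 1) (hAB : A * B = B * A) :
    (Ai * Bi) * (A * B) = 1 := by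
  calc (Ai * Bi) * (A * B) = Ai * (Bi * B) * A := by rw [hAB]; simp only [mul_assoc]
    _ = 1 := by rw [hB, mul_one, hA]

namespace DH
variable (h : DH q t T Ti X1 X1i X2 X2i Y1 Y1i Y2 Y2i)
include h

lemma TT : T * T = (t - t⁻¹) • T + 1 := by
  have := h.hecke
  simp only [Algebra.algebraMap_eq_smul_one, mul_sub, add_mul, smul_mul_assoc, one_mul,
    mul_smul_comm, mul_one, smul_add, smul_smul, mul_inv_cancel₀ h.t0, one_smul] at this
  rw [← sub_eq_zero, ← this]; module

lemma Ti_eq : Ti = T - (t - t⁻¹) • 1 := by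
  have h1 : T = (t - t⁻¹) • 1 + Ti := by
    calc T = T * T * Ti := by rw [mul_assoc, h.TTi, mul_one]
      _ = _ := by rw [h.TT, add_mul, smul_mul_assoc, h.TTi, one_mul]
  rw [eq_sub_iff_add_eq, add_comm]; exact h1.symm

lemma TiTi : Ti * Ti = (-(t - t⁻¹)) • Ti + 1 := by
  nth_rewrite 1 [h.Ti_eq]
  rw [sub_mul, h.TTi, smul_mul_assoc, one_mul]; module

lemma cTTi (y : R) : T * (Ti * y) = y := by rw [← mul_assoc, h.TTi, one_mul]
lemma cTiT (y : R) : Ti * (T * y) = y := by rw [← mul_assoc, h.TiT, one_mul]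

lemma X1T : X1 * T = Ti * X2 := by rw [← h.TX1T, mul_assoc, h.cTiT]
lemma TX1 : T * X1 = X2 * Ti := by rw [← h.TX1T, mul_assoc, h.TTi, mul_one]
lemma Y1Ti : Y1 * Ti = T * Y2 := by rw [← h.TiY1Ti, mul_assoc, h.cTTi]

lemma comm_of_Ti {y : R} (hy : y * Ti = Ti * y) : y * T = T * y :=
  (inv_comm' h.TiT h.TTi hy.symm).symm

lemma symX_T {a : R} (ha : a ∈ symAlg X1 X2 X1i X2i) : a * T = T * a := by
  refine adjoin_comm' ?_ ha
  rintro a (rfl | rfl | rfl)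
  · exact sum_comm' h.TT h.TX1T
  · exact prod_comm' h.TX1T h.Xcomm
  · exact inv_comm' (prod_inv' h.X1X1i h.X2X2i h.Xcomm) (prod_inv'' h.X1iX1 h.X2iX2 h.Xcomm)
      (prod_comm' h.TX1T h.Xcomm)

lemma symY_T {a : R} (ha : a ∈ symAlg Y1 Y2 Y1i Y2i) : a * T = T * a := by
  refine h.comm_of_Ti (adjoin_comm' ?_ ha)
  rintro a (rfl | rfl | rfl)
  · exact sum_comm' h.TiTi h.TiY1Ti
  · exact prod_comm' h.TiY1Ti h.Ycomm
  · exact inv_comm' (prod_inv' h.Y1Y1i h.Y2Y2i h.Ycomm) (prod_inv'' h.Y1iY1 h.Y2iY2 h.Ycomm)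
      (prod_comm' h.TiY1Ti h.Ycomm)

omit h in
lemma sym_A {A B Ai Bi : R} (h1 : A * Ai = 1) (h2 : Ai * A = 1) (h3 : B * Bi = 1)
    (h4 : Bi * B = 1) (hAB : A * B = B * A) {a : R} (ha : a ∈ symAlg A B Ai Bi) :
    a * A = A * a := by
  refine adjoin_comm' ?_ ha
  rintro a (rfl | rfl | rfl)
  · rw [add_mul, mul_add, hAB]
  · rw [mul_assoc, hAB]
  · exact inv_comm' (prod_inv' h1 h3 hAB) (prod_inv'' h2 h4 hAB) (by rw [mul_assoc, hAB])

lemma symX_X1 {a : R} (ha : a ∈ symAlg X1 X2 X1i X2i) : a * X1 = X1 * a :=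
  sym_A h.X1X1i h.X1iX1 h.X2X2i h.X2iX2 h.Xcomm ha

lemma symY_Y1 {a : R} (ha : a ∈ symAlg Y1 Y2 Y1i Y2i) : a * Y1 = Y1 * a :=
  sym_A h.Y1Y1i h.Y1iY1 h.Y2Y2i h.Y2iY2 h.Ycomm ha

/-! the element `P = Ti * Y1` -/

lemma X2i_eq : X2i = Ti * X1i * Ti := by
  have : X2 * (Ti * X1i * Ti) = 1 := by
    rw [← h.TX1T]; simp only [mul_assoc, h.cTTi]
    rw [← mul_assoc X1, h.X1X1i, one_mul, h.TTi]
  calc X2i = X2i * (X2 * (Ti * X1i * Ti)) := by rw [this, mul_one]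
    _ = _ := by rw [← mul_assoc, h.X2iX2, one_mul]

lemma X1iP : X1i * (Ti * Y1) = (Ti * Y1) * X2i := by
  have h1 := h.X1iY2
  rw [← h.TiY1Ti] at h1
  calc X1i * (Ti * Y1) = X1i * (Ti * Y1 * Ti) * T := by simp only [mul_assoc, h.TiT, mul_one]
    _ = _ := by rw [h1, h.X2i_eq]; simp only [mul_assoc, h.TiT, mul_one]

lemma X1P : X1 * (Ti * Y1) = (Ti * Y1) * X2 := by
  calc X1 * (Ti * Y1) = X1 * ((Ti * Y1) * X2i) * X2 := by
        simp only [mul_assoc, h.X2iX2, mul_one]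
    _ = _ := by rw [← h.X1iP, ← mul_assoc X1, h.X1X1i, one_mul]

lemma PX1 : (Ti * Y1) * X1 = (q ^ 2) • (X2 * (Ti * Y1)) := by
  have h1 : (Ti * Y1) * (X1 * X2) = (q ^ 2) • (X2 * (Ti * Y1) * X2) := by
    have hc : (X1 * X2) * Ti = Ti * (X1 * X2) :=
      (inv_comm' h.TTi h.TiT (h.symX_T (symAlg_mul X1 X2 X1i X2i)).symm).symm
    rw [mul_assoc, h.YXX, mul_smul_comm, ← mul_assoc Ti, ← hc, h.Xcomm]
    congr 1
    have := h.X1P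
    simp only [mul_assoc] at this ⊢
    rw [this]
  calc (Ti * Y1) * X1 = (Ti * Y1) * (X1 * X2) * X2i := by simp only [mul_assoc, h.X2X2i, mul_one]
    _ = _ := by rw [h1, smul_mul_assoc, mul_assoc _ X2, h.X2X2i, mul_one]

lemma X2P : X2 * (Ti * Y1) = (Ti * Y1) * ((q ^ 2)⁻¹ • X1) := by
  rw [mul_smul_comm, h.PX1, smul_smul, inv_mul_cancel₀ (pow_ne_zero _ h.q0), one_smul]

lemma PPi : (Ti * Y1) * (Y1i * T) = 1 := by
  rw [mul_assoc, ← mul_assoc Y1, h.Y1Y1i, one_mul, h.TiT]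
lemma PiP : (Y1i * T) * (Ti * Y1) = 1 := by
  rw [mul_assoc, h.cTTi, h.Y1iY1]

lemma X2iP : X2i * (Ti * Y1) = (Ti * Y1) * ((q ^ 2) • X1i) := by
  have h1 : X2 * ((Ti * Y1) * ((q ^ 2) • X1i)) = Ti * Y1 := by
    rw [← mul_assoc, h.X2P, mul_assoc, smul_mul_smul_comm, h.X1X1i,
      inv_mul_cancel₀ (pow_ne_zero _ h.q0), one_smul, mul_one]
  calc X2i * (Ti * Y1) = X2i * (X2 * ((Ti * Y1) * ((q ^ 2) • X1i))) := by rw [h1]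
    _ = _ := by rw [← mul_assoc X2i, h.X2iX2, one_mul]

end DH
end gen


section spanning
set_option linter.unusedSectionVars false
variable {R : Type*} [Ring R] [Algebra ℂ R]
variable {q t : ℂ} {T Ti X1 X1i X2 X2i Y1 Y1i Y2 Y2i : R}

abbrev algX (X1 X1i X2 X2i : R) : Subalgebra ℂ R := Algebra.adjoin ℂ {X1, X1i, X2, X2i}
abbrev algY (T Ti Y1 Y1i Y2 Y2i : R) : Subalgebra ℂ R :=
  Algebra.adjoin ℂ {T, Ti, Y1, Y1i, Y2, Y2i}

/-- `S + X1 S` -/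
def modX (S : Subalgebra ℂ R) (X1 : R) : Submodule ℂ R where
  carrier := {b | ∃ s ∈ S, ∃ s' ∈ S, b = s + s' * X1}
  zero_mem' := ⟨0, S.zero_mem, 0, S.zero_mem, by simp⟩
  add_mem' := by
    rintro _ _ ⟨s, hs, s', hs', rfl⟩ ⟨r, hr, r', hr', rfl⟩
    exact ⟨s + r, S.add_mem hs hr, s' + r', S.add_mem hs' hr', by rw [add_mul]; abel⟩
  smul_mem' := by
    rintro c _ ⟨s, hs, s', hs', rfl⟩
    exact ⟨c • s, S.smul_mem hs _, c • s', S.smul_mem hs' _, by simp⟩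

lemma mem_modX {S : Subalgebra ℂ R} {X1 b : R} :
    b ∈ modX S X1 ↔ ∃ s ∈ S, ∃ s' ∈ S, b = s + s' * X1 := Iff.rfl

lemma A_inv {A B Ai Bi : R} (h1 : A * Ai = 1) (h2 : Ai * A = 1) (h3 : B * Bi = 1)
    (hAB : A * B = B * A) :
    Ai = (A + B - A) * (Ai * Bi) := by
  have : Ai * B = B * Ai := inv_comm' h1 h2 hAB
  rw [add_sub_cancel_left, ← mul_assoc, ← this, mul_assoc, h3, mul_one]

namespace DH
variable (h : DH q t T Ti X1 X1i X2 X2i Y1 Y1i Y2 Y2i)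
include h

lemma X1X1 : X1 * X1 = (X1 + X2) * X1 - X1 * X2 := by rw [add_mul, h.Xcomm]; abel
lemma Y1Y1 : Y1 * Y1 = (Y1 + Y2) * Y1 - Y1 * Y2 := by rw [add_mul, h.Ycomm]; abel

lemma X1i_eq : X1i = (X1 + X2 - X1) * (X1i * X2i) := A_inv h.X1X1i h.X1iX1 h.X2X2i h.Xcomm
lemma Y1i_eq : Y1i = (Y1 + Y2 - Y1) * (Y1i * Y2i) := A_inv h.Y1Y1i h.Y1iY1 h.Y2Y2i h.Ycomm
lemma X2i_eq' : X2i = X1 * (X1i * X2i) := by rw [← mul_assoc, h.X1X1i, one_mul]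
lemma Y2i_eq' : Y2i = Y1 * (Y1i * Y2i) := by rw [← mul_assoc, h.Y1Y1i, one_mul]

lemma algX_le {b : R} (hb : b ∈ algX X1 X1i X2 X2i) : b ∈ modX (symAlg X1 X2 X1i X2i) X1 := by
  set S := symAlg X1 X2 X1i X2i with hS
  have hadd : X1 + X2 ∈ S := symAlg_add _ _ _ _
  have hmul : X1 * X2 ∈ S := symAlg_mul _ _ _ _
  have hinv : X1i * X2i ∈ S := symAlg_inv _ _ _ _
  have hSs : S ≤ rstab (modX S X1) := by
    rintro r hr _ ⟨s, hs, s', hs', rfl⟩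
    refine ⟨s * r, S.mul_mem hs hr, s' * r, S.mul_mem hs' hr, ?_⟩
    rw [add_mul, mul_assoc, mul_assoc, ← h.symX_X1 hr]
  have hX1 : X1 ∈ rstab (modX S X1) := by
    rintro _ ⟨s, hs, s', hs', rfl⟩
    refine ⟨- (s' * (X1 * X2)), S.neg_mem (S.mul_mem hs' hmul), s + s' * (X1 + X2),
      S.add_mem hs (S.mul_mem hs' hadd), ?_⟩
    rw [add_mul, mul_assoc, h.X1X1]; simp only [add_mul, mul_add, mul_sub, mul_assoc]; abel
  have hX2 : X2 ∈ rstab (modX S X1) := by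
    have : X2 = (X1 + X2) - X1 := by abel
    rw [this]; exact sub_mem (hSs hadd) hX1
  have hall : algX X1 X1i X2 X2i ≤ rstab (modX S X1) := by
    refine Algebra.adjoin_le ?_
    rintro a (rfl | rfl | rfl | rfl)
    · exact hX1
    · rw [SetLike.mem_coe, h.X1i_eq]
      exact mul_mem (sub_mem (hSs hadd) hX1) (hSs hinv)
    · exact hX2
    · rw [SetLike.mem_coe, h.X2i_eq']
      exact mul_mem hX1 (hSs hinv)
  have := hall hb 1 ⟨1, S.one_mem, 0, S.zero_mem, by simp⟩
  rwa [one_mul] at this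

lemma TY1 : T * Y1 = (Y1 + Y2) * T - Y1 * T + (t - t⁻¹) • Y1 := by
  have h1 := h.Y1Ti
  have h2 := h.symY_T (symAlg_add Y1 Y2 Y1i Y2i)
  rw [h.Ti_eq, mul_sub, mul_smul_comm, mul_one] at h1
  have h3 : T * Y1 = T * (Y1 + Y2) - T * Y2 := by rw [mul_add]; abel
  rw [h3, ← h1, ← h2]; abel

lemma algY_le {a : R} (ha : a ∈ algY T Ti Y1 Y1i Y2 Y2i) :
    ∃ u ∈ modX (symAlg Y1 Y2 Y1i Y2i) Y1, ∃ v ∈ modX (symAlg Y1 Y2 Y1i Y2i) Y1,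
      a = u + v * T := by
  set S := symAlg Y1 Y2 Y1i Y2i with hS
  have hadd : Y1 + Y2 ∈ S := symAlg_add _ _ _ _
  have hmul : Y1 * Y2 ∈ S := symAlg_mul _ _ _ _
  have hinv : Y1i * Y2i ∈ S := symAlg_inv _ _ _ _
  have hSM : S ≤ rstab (modX S Y1) := by
    rintro r hr _ ⟨s, hs, s', hs', rfl⟩
    refine ⟨s * r, S.mul_mem hs hr, s' * r, S.mul_mem hs' hr, ?_⟩
    rw [add_mul, mul_assoc, mul_assoc, ← h.symY_Y1 hr]
  have hYM : Y1 ∈ rstab (modX S Y1) := by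
    rintro _ ⟨s, hs, s', hs', rfl⟩
    refine ⟨- (s' * (Y1 * Y2)), S.neg_mem (S.mul_mem hs' hmul), s + s' * (Y1 + Y2),
      S.add_mem hs (S.mul_mem hs' hadd), ?_⟩
    rw [add_mul, mul_assoc, h.Y1Y1]; simp only [add_mul, mul_add, mul_sub, mul_assoc]; abel
  let N : Submodule ℂ R :=
    { carrier := {a | ∃ u ∈ modX S Y1, ∃ v ∈ modX S Y1, a = u + v * T}
      zero_mem' := ⟨0, zero_mem _, 0, zero_mem _, by simp⟩
      add_mem' := by
        rintro _ _ ⟨s, hs, s', hs', rfl⟩ ⟨r, hr, r', hr', rfl⟩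
        exact ⟨s + r, add_mem hs hr, s' + r', add_mem hs' hr', by rw [add_mul]; abel⟩
      smul_mem' := by
        rintro c _ ⟨s, hs, s', hs', rfl⟩
        exact ⟨c • s, Submodule.smul_mem _ _ hs, c • s', Submodule.smul_mem _ _ hs', by simp⟩ }
  have hSs : S ≤ rstab N := by
    rintro r hr _ ⟨u, hu, v, hv, rfl⟩
    refine ⟨u * r, hSM hr u hu, v * r, hSM hr v hv, ?_⟩
    rw [add_mul, mul_assoc, mul_assoc, ← h.symY_T hr]
  have hT : T ∈ rstab N := by
    rintro _ ⟨u, hu, v, hv, rfl⟩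
    refine ⟨v, hv, u + (t - t⁻¹) • v, add_mem hu (Submodule.smul_mem _ _ hv), ?_⟩
    rw [add_mul, mul_assoc, h.TT, mul_add, add_mul, mul_smul_comm, smul_mul_assoc, mul_one]; abel
  have hY1 : Y1 ∈ rstab N := by
    rintro _ ⟨u, hu, v, hv, rfl⟩
    refine ⟨u * Y1 + (t - t⁻¹) • (v * Y1), add_mem (hYM u hu) (Submodule.smul_mem _ _ (hYM v hv)),
      v * (Y1 + Y2) - v * Y1, sub_mem (hSM hadd v hv) (hYM v hv), ?_⟩
    rw [add_mul, mul_assoc, h.TY1, mul_add, mul_sub, sub_mul, mul_smul_comm]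
    simp only [mul_assoc]; abel
  have hY2 : Y2 ∈ rstab N := by
    have : Y2 = (Y1 + Y2) - Y1 := by abel
    rw [this]; exact sub_mem (hSs hadd) hY1
  have hall : algY T Ti Y1 Y1i Y2 Y2i ≤ rstab N := by
    refine Algebra.adjoin_le ?_
    rintro a (rfl | rfl | rfl | rfl | rfl | rfl)
    · exact hT
    · rw [SetLike.mem_coe, h.Ti_eq]
      exact sub_mem hT (Subalgebra.smul_mem _ (one_mem _) _)
    · exact hY1
    · rw [SetLike.mem_coe, h.Y1i_eq]
      exact mul_mem (sub_mem (hSs hadd) hY1) (hSs hinv)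
    · exact hY2
    · rw [SetLike.mem_coe, h.Y2i_eq']
      exact mul_mem hY1 (hSs hinv)
  have := hall ha 1 ⟨1, ⟨1, S.one_mem, 0, S.zero_mem, by simp⟩, 0, zero_mem _, by simp⟩
  rwa [one_mul] at this

omit h in
lemma push_adjoin {s : Set R} {P : R} (hs : ∀ a ∈ s, ∃ b ∈ Algebra.adjoin ℂ s, a * P = P * b)
    {a : R} (ha : a ∈ Algebra.adjoin ℂ s) : ∃ b ∈ Algebra.adjoin ℂ s, a * P = P * b := by
  induction ha using Algebra.adjoin_induction with
  | mem x hx => exact hs x hx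
  | algebraMap r => exact ⟨_, Subalgebra.algebraMap_mem _ r, Algebra.commutes r P⟩
  | add x y _ _ h1 h2 =>
    obtain ⟨b, hb, e1⟩ := h1
    obtain ⟨c, hc, e2⟩ := h2
    exact ⟨b + c, add_mem hb hc, by rw [add_mul, mul_add, e1, e2]⟩
  | mul x y _ _ h1 h2 =>
    obtain ⟨b, hb, e1⟩ := h1
    obtain ⟨c, hc, e2⟩ := h2
    exact ⟨b * c, mul_mem hb hc, by rw [mul_assoc, e2, ← mul_assoc, e1, mul_assoc]⟩

lemma algX_P {b : R} (hb : b ∈ algX X1 X1i X2 X2i) :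
    ∃ b' ∈ algX X1 X1i X2 X2i, b * (Ti * Y1) = (Ti * Y1) * b' := by
  refine push_adjoin ?_ hb
  have m1 : X1 ∈ algX X1 X1i X2 X2i := Algebra.subset_adjoin (by simp)
  have m2 : X1i ∈ algX X1 X1i X2 X2i := Algebra.subset_adjoin (by simp)
  have m3 : X2 ∈ algX X1 X1i X2 X2i := Algebra.subset_adjoin (by simp)
  have m4 : X2i ∈ algX X1 X1i X2 X2i := Algebra.subset_adjoin (by simp)
  rintro a (rfl | rfl | rfl | rfl)
  · exact ⟨_, m3, h.X1P⟩
  · exact ⟨_, m4, h.X1iP⟩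
  · exact ⟨_, Subalgebra.smul_mem _ m1 _, h.X2P⟩
  · exact ⟨_, Subalgebra.smul_mem _ m2 _, h.X2iP⟩

omit h in
lemma flip_inv {P Pi a b : R} (h1 : P * Pi = 1) (h2 : Pi * P = 1) (e : b * P = P * a) :
    a * Pi = Pi * b := by
  calc a * Pi = Pi * (P * a) * Pi := by rw [← mul_assoc Pi P, h2, one_mul]
    _ = _ := by rw [← e, mul_assoc, mul_assoc, h1, mul_one]

lemma algX_Pi {b : R} (hb : b ∈ algX X1 X1i X2 X2i) :
    ∃ b' ∈ algX X1 X1i X2 X2i, b * (Y1i * T) = (Y1i * T) * b' := by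
  refine push_adjoin ?_ hb
  have m1 : X1 ∈ algX X1 X1i X2 X2i := Algebra.subset_adjoin (by simp)
  have m2 : X1i ∈ algX X1 X1i X2 X2i := Algebra.subset_adjoin (by simp)
  have m3 : X2 ∈ algX X1 X1i X2 X2i := Algebra.subset_adjoin (by simp)
  have m4 : X2i ∈ algX X1 X1i X2 X2i := Algebra.subset_adjoin (by simp)
  have q2 := pow_ne_zero 2 h.q0
  rintro a (rfl | rfl | rfl | rfl)
  · refine ⟨_, Subalgebra.smul_mem _ m3 (q ^ 2), flip_inv h.PPi h.PiP ?_⟩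
    rw [smul_mul_assoc, h.PX1]
  · refine ⟨_, Subalgebra.smul_mem _ m4 (q ^ 2)⁻¹, flip_inv h.PPi h.PiP ?_⟩
    rw [smul_mul_assoc, h.X2iP, mul_smul_comm, smul_smul, inv_mul_cancel₀ q2, one_smul]
  · exact ⟨_, m1, flip_inv h.PPi h.PiP h.X1P⟩
  · exact ⟨_, m2, flip_inv h.PPi h.PiP h.X1iP⟩

lemma stab_all : Algebra.adjoin ℂ {T, Ti, X1, X1i, X2, X2i, Y1, Y1i, Y2, Y2i} ≤
    rstab (Subalgebra.toSubmodule (algY T Ti Y1 Y1i Y2 Y2i) *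
      Subalgebra.toSubmodule (algX X1 X1i X2 X2i)) := by
  set A := algY T Ti Y1 Y1i Y2 Y2i with hA
  set B := algX X1 X1i X2 X2i with hB
  set N := Subalgebra.toSubmodule A * Subalgebra.toSubmodule B with hN
  have mem : ∀ a ∈ A, ∀ b ∈ B, a * b ∈ N := fun a ha b hb => Submodule.mul_mem_mul ha hb
  have key : ∀ r, (∀ b ∈ B, b * r ∈ N) → r ∈ rstab N := by
    intro r hr n hn
    induction hn using Submodule.mul_induction_on' with
    | mem_mul_mem a ha b hb =>
      have h1 := hr b hb
      rw [mul_assoc]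
      have : ∀ y ∈ N, a * y ∈ N := by
        intro y hy
        induction hy using Submodule.mul_induction_on' with
        | mem_mul_mem a' ha' b' hb' => rw [← mul_assoc]; exact mem _ (mul_mem ha ha') _ hb'
        | add x _ y _ h1 h2 => rw [mul_add]; exact add_mem h1 h2
      exact this _ h1
    | add x _ y _ h1 h2 => rw [add_mul]; exact add_mem h1 h2
  have mT : T ∈ A := Algebra.subset_adjoin (by simp)
  have mTi : Ti ∈ A := Algebra.subset_adjoin (by simp)
  have mY1 : Y1 ∈ A := Algebra.subset_adjoin (by simp)
  have mY1i : Y1i ∈ A := Algebra.subset_adjoin (by simp)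
  have m1 : X1 ∈ B := Algebra.subset_adjoin (by simp)
  have m2 : X1i ∈ B := Algebra.subset_adjoin (by simp)
  have m3 : X2 ∈ B := Algebra.subset_adjoin (by simp)
  have m4 : X2i ∈ B := Algebra.subset_adjoin (by simp)
  have symB : symAlg X1 X2 X1i X2i ≤ B := by
    refine Algebra.adjoin_le ?_
    rintro a (rfl | rfl | rfl)
    · exact add_mem m1 m3
    · exact mul_mem m1 m3
    · exact mul_mem m2 m4
  have kB : ∀ r ∈ B, r ∈ rstab N := fun r hr => key r fun b hb => by
    have := mem 1 (one_mem _) _ (mul_mem hb hr); rwa [one_mul] at this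
  have kT : T ∈ rstab N := by
    refine key _ fun b hb => ?_
    obtain ⟨s, hs, s', hs', rfl⟩ := h.algX_le hb
    rw [add_mul, h.symX_T hs, mul_assoc, h.X1T, ← mul_assoc]
    have hsTi : s' * Ti = Ti * s' := by
      rw [h.Ti_eq, mul_sub, sub_mul, h.symX_T hs']; simp
    rw [hsTi, mul_assoc]
    exact add_mem (mem _ mT _ (symB hs)) (mem _ mTi _ (mul_mem (symB hs') m3))
  have kTi : Ti ∈ rstab N := by
    rw [h.Ti_eq]; exact sub_mem kT (Subalgebra.smul_mem _ (one_mem _) _)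
  have kP : Ti * Y1 ∈ rstab N := by
    refine key _ fun b hb => ?_
    obtain ⟨b', hb', e⟩ := h.algX_P hb
    rw [e]; exact mem _ (mul_mem mTi mY1) _ hb'
  have kPi : Y1i * T ∈ rstab N := by
    refine key _ fun b hb => ?_
    obtain ⟨b', hb', e⟩ := h.algX_Pi hb
    rw [e]; exact mem _ (mul_mem mY1i mT) _ hb'
  have kY1 : Y1 ∈ rstab N := by
    have := mul_mem kT kP; rwa [h.cTTi] at this
  have kY1i : Y1i ∈ rstab N := by
    have := mul_mem kPi kTi; rwa [mul_assoc, h.TTi, mul_one] at this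
  have kY2 : Y2 ∈ rstab N := by
    rw [← h.TiY1Ti]; exact mul_mem (mul_mem kTi kY1) kTi
  have hY2i : Y2i = T * Y1i * T := by
    have : Y2 * (T * Y1i * T) = 1 := by
      rw [← h.TiY1Ti]; simp only [mul_assoc, h.cTiT]
      rw [← mul_assoc Y1, h.Y1Y1i, one_mul, h.TiT]
    calc Y2i = Y2i * (Y2 * (T * Y1i * T)) := by rw [this, mul_one]
      _ = _ := by rw [← mul_assoc, h.Y2iY2, one_mul]
  have kY2i : Y2i ∈ rstab N := by
    rw [hY2i]; exact mul_mem (mul_mem kT kY1i) kT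
  refine Algebra.adjoin_le ?_
  rintro a (rfl | rfl | rfl | rfl | rfl | rfl | rfl | rfl | rfl | rfl)
  exacts [kT, kTi, kB _ m1, kB _ m2, kB _ m3, kB _ m4, kY1, kY1i, kY2, kY2i]

lemma mem_prod {r : R} (hr : r ∈ Algebra.adjoin ℂ {T, Ti, X1, X1i, X2, X2i, Y1, Y1i, Y2, Y2i}) :
    r ∈ Subalgebra.toSubmodule (algY T Ti Y1 Y1i Y2 Y2i) *
      Subalgebra.toSubmodule (algX X1 X1i X2 X2i) := by
  have := h.stab_all hr 1 (by
    rw [← one_mul (1 : R)]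
    exact Submodule.mul_mem_mul (one_mem (algY T Ti Y1 Y1i Y2 Y2i))
      (one_mem (algX X1 X1i X2 X2i)))
  rwa [one_mul] at this

end DH
end spanning


section spherical
set_option linter.unusedSectionVars false
variable {R : Type*} [Ring R] [Algebra ℂ R]
variable {q t : ℂ} {T Ti X1 X1i X2 X2i Y1 Y1i Y2 Y2i : R}

def eG (t : ℂ) (T : R) : R := ((1 + t ^ 2)⁻¹ : ℂ) • (1 + t • T)

namespace DH
variable (h : DH q t T Ti X1 X1i X2 X2i Y1 Y1i Y2 Y2i)
include h

lemma t21 : 1 + t ^ 2 ≠ 0 := fun e => h.t2 (by linear_combination e)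

lemma Te : T * eG t T = t • eG t T := by
  unfold eG
  rw [mul_smul_comm, mul_add, mul_one, mul_smul_comm, h.TT, smul_comm t]
  congr 1
  rw [smul_add, smul_smul, smul_add, smul_smul]
  have : t * (t - t⁻¹) = t * t - 1 := by rw [mul_sub, mul_inv_cancel₀ h.t0]
  rw [this]; module

lemma eT : eG t T * T = t • eG t T := by
  rw [← h.Te]; simp [eG, mul_add, add_mul]

lemma Tie : Ti * eG t T = t⁻¹ • eG t T := by
  have := h.cTiT (eG t T)
  rw [h.Te, mul_smul_comm] at this
  nth_rewrite 2 [← this]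
  rw [smul_smul, inv_mul_cancel₀ h.t0, one_smul]

lemma eTi : eG t T * Ti = t⁻¹ • eG t T := by
  have : eG t T * T * Ti = eG t T := by rw [mul_assoc, h.TTi, mul_one]
  rw [h.eT, smul_mul_assoc] at this
  nth_rewrite 2 [← this]
  rw [smul_smul, inv_mul_cancel₀ h.t0, one_smul]

lemma ee : eG t T * eG t T = eG t T := by
  nth_rewrite 1 [eG]
  rw [smul_mul_assoc, add_mul, one_mul, smul_mul_assoc, h.Te, smul_smul]
  have : eG t T + (t * t) • eG t T = (1 + t ^ 2) • eG t T := by module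
  rw [this, smul_smul, inv_mul_cancel₀ h.t21, one_smul]

omit h in
lemma comm_e {a : R} (ha : a * T = T * a) : a * eG t T = eG t T * a := by
  simp [eG, mul_add, add_mul, ha]

lemma eX2e : eG t T * X2 * eG t T = (t ^ 2) • (eG t T * X1 * eG t T) := by
  rw [← h.TX1T, ← mul_assoc, ← mul_assoc, h.eT, mul_assoc, h.Te]
  simp only [smul_mul_assoc, mul_smul_comm, smul_smul, pow_two]

lemma eY2e : eG t T * Y2 * eG t T = (t⁻¹ ^ 2) • (eG t T * Y1 * eG t T) := by
  rw [← h.TiY1Ti, ← mul_assoc, ← mul_assoc, h.eTi, mul_assoc, h.Tie]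
  simp only [smul_mul_assoc, mul_smul_comm, smul_smul, pow_two]

lemma eYX2e : eG t T * (Y2 * X2) * eG t T = eG t T * (Y1 * X1) * eG t T := by
  rw [← h.TiY1Ti, ← h.TX1T]
  have : eG t T * (Ti * Y1 * Ti * (T * X1 * T)) * eG t T
      = (eG t T * Ti) * (Y1 * X1) * (T * eG t T) := by
    simp only [mul_assoc, h.cTiT]
  rw [this, h.eTi, h.Te]
  simp only [smul_mul_assoc, mul_smul_comm, smul_smul]
  rw [mul_inv_cancel₀ h.t0, one_smul]

lemma tk : 1 + t⁻¹ ^ 2 ≠ 0 := by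
  have h1 := h.t21
  have h2 := h.t0
  intro e
  apply h1
  have : (t * t⁻¹) ^ 2 = 1 := by rw [mul_inv_cancel₀ h2, one_pow]
  linear_combination t ^ 2 * e - this

lemma eX1e : eG t T * X1 * eG t T = (1 + t ^ 2)⁻¹ • (eG t T * (X1 + X2) * eG t T) := by
  rw [mul_add, add_mul, h.eX2e]
  have : eG t T * X1 * eG t T + t ^ 2 • (eG t T * X1 * eG t T)
    = (1 + t ^ 2) • (eG t T * X1 * eG t T) := by module
  rw [this, smul_smul, inv_mul_cancel₀ h.t21, one_smul]

lemma eY1e : eG t T * Y1 * eG t T = (1 + t⁻¹ ^ 2)⁻¹ • (eG t T * (Y1 + Y2) * eG t T) := by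
  rw [mul_add, add_mul, h.eY2e]
  have : eG t T * Y1 * eG t T + t⁻¹ ^ 2 • (eG t T * Y1 * eG t T)
    = (1 + t⁻¹ ^ 2) • (eG t T * Y1 * eG t T) := by module
  rw [this, smul_smul, inv_mul_cancel₀ h.tk, one_smul]

lemma eWe : eG t T * ((t⁻¹ ^ 2) • (Y1 * X1) + Y2 * X2) * eG t T =
    (1 + t⁻¹ ^ 2) • (eG t T * (Y1 * X1) * eG t T) := by
  rw [mul_add, add_mul, h.eYX2e, mul_smul_comm, smul_mul_assoc]; module

lemma eYXe : eG t T * (Y1 * X1) * eG t T =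
    (1 + t⁻¹ ^ 2)⁻¹ • (eG t T * ((t⁻¹ ^ 2) • (Y1 * X1) + Y2 * X2) * eG t T) := by
  rw [h.eWe, smul_smul, inv_mul_cancel₀ h.tk, one_smul]

lemma pull {s r w : R} (hs : s ∈ symAlg Y1 Y2 Y1i Y2i) (hr : r ∈ symAlg X1 X2 X1i X2i) :
    eG t T * (s * w * r) * eG t T = s * (eG t T * w * eG t T) * r := by
  have h1 : s * eG t T = eG t T * s := comm_e (h.symY_T hs)
  have h2 : r * eG t T = eG t T * r := comm_e (h.symX_T hr)
  calc eG t T * (s * w * r) * eG t T = (eG t T * s) * w * (r * eG t T) := by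
        simp only [mul_assoc]
    _ = _ := by rw [← h1, h2]; simp only [mul_assoc]

lemma sph_mem {J : Submodule ℂ R}
    (J0 : ∀ s ∈ symAlg Y1 Y2 Y1i Y2i, ∀ r ∈ symAlg X1 X2 X1i X2i, s * eG t T * r ∈ J)
    (J1 : ∀ s ∈ symAlg Y1 Y2 Y1i Y2i, ∀ r ∈ symAlg X1 X2 X1i X2i,
      s * (eG t T * ((t⁻¹ ^ 2) • (Y1 * X1) + Y2 * X2) * eG t T) * r ∈ J)
    {a b : R} (ha : a ∈ algY T Ti Y1 Y1i Y2 Y2i) (hb : b ∈ algX X1 X1i X2 X2i) :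
    eG t T * (a * b) * eG t T ∈ J := by
  set SY := symAlg Y1 Y2 Y1i Y2i with hSY
  set SX := symAlg X1 X2 X1i X2i with hSX
  set e := eG t T with he
  have one : ∀ s ∈ SY, ∀ r ∈ SX, s * (e * 1 * e) * r ∈ J := by
    intro s hs r hr; rw [mul_one, h.ee]; exact J0 s hs r hr
  have cX : ∀ w, e * (w * (X1 + X2)) * e = (e * w * e) * (X1 + X2) := fun w => by
    have := comm_e (t := t) (h.symX_T (symAlg_add X1 X2 X1i X2i))
    simp only [mul_assoc] at this ⊢
    rw [this]
  have mX : ∀ s ∈ SY, ∀ r ∈ SX, s * (e * X1 * e) * r ∈ J := by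
    intro s hs r hr
    have h1 := cX 1
    rw [one_mul, mul_one, h.ee] at h1
    rw [h.eX1e, h1, mul_smul_comm, smul_mul_assoc]
    refine J.smul_mem _ ?_
    rw [← mul_assoc, mul_assoc]
    exact J0 s hs _ (mul_mem (symAlg_add _ _ _ _) hr)
  have cY : e * (Y1 + Y2) * e = (Y1 + Y2) * e := by
    have := comm_e (t := t) (h.symY_T (symAlg_add Y1 Y2 Y1i Y2i))
    rw [← this, mul_assoc, h.ee]
  have mY : ∀ s ∈ SY, ∀ r ∈ SX, s * (e * Y1 * e) * r ∈ J := by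
    intro s hs r hr
    rw [h.eY1e, cY, mul_smul_comm, smul_mul_assoc]
    refine J.smul_mem _ ?_
    rw [← mul_assoc]
    exact J0 _ (mul_mem hs (symAlg_add _ _ _ _)) r hr
  have mYX : ∀ s ∈ SY, ∀ r ∈ SX, s * (e * (Y1 * X1) * e) * r ∈ J := by
    intro s hs r hr
    rw [h.eYXe, mul_smul_comm, smul_mul_assoc]
    exact J.smul_mem _ (J1 s hs r hr)
  have mT : ∀ s ∈ SY, ∀ r ∈ SX, s * (e * T * e) * r ∈ J := by
    intro s hs r hr
    rw [h.eT, smul_mul_assoc, mul_smul_comm, smul_mul_assoc, h.ee]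
    exact J.smul_mem _ (J0 s hs r hr)
  have mTX : ∀ s ∈ SY, ∀ r ∈ SX, s * (e * (T * X1) * e) * r ∈ J := by
    intro s hs r hr
    rw [← mul_assoc e, h.eT, smul_mul_assoc, smul_mul_assoc, mul_smul_comm, smul_mul_assoc]
    exact J.smul_mem _ (mX s hs r hr)
  have mYT : ∀ s ∈ SY, ∀ r ∈ SX, s * (e * (Y1 * T) * e) * r ∈ J := by
    intro s hs r hr
    rw [mul_assoc e, mul_assoc Y1, h.Te, mul_smul_comm, mul_smul_comm, mul_smul_comm,
      smul_mul_assoc, ← mul_assoc e]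
    exact J.smul_mem _ (mY s hs r hr)
  have mYTX : ∀ s ∈ SY, ∀ r ∈ SX, s * (e * (Y1 * (T * X1)) * e) * r ∈ J := by
    intro s hs r hr
    have h1 : e * (Y1 * (T * X1)) * e =
        t⁻¹ • ((e * Y1 * e) * (X1 + X2) - e * (Y1 * X1) * e) := by
      rw [← cX, h.TX1]
      have : e * (Y1 * (X2 * Ti)) * e = e * (Y1 * X2) * (Ti * e) := by simp only [mul_assoc]
      rw [this, h.Tie, mul_smul_comm]
      congr 1
      simp only [mul_add, add_mul]; abel
    rw [h1, mul_smul_comm, smul_mul_assoc, mul_sub, sub_mul]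
    refine J.smul_mem _ (sub_mem ?_ (mYX s hs r hr))
    rw [← mul_assoc s, mul_assoc _ _ r]
    exact mY s hs _ (mul_mem (symAlg_add _ _ _ _) hr)
  obtain ⟨r, hr, r', hr', rfl⟩ := h.algX_le hb
  obtain ⟨u, ⟨s, hs, s', hs', rfl⟩, v, ⟨p, hp, p', hp', rfl⟩, rfl⟩ := h.algY_le ha
  have expand : (s + s' * Y1 + (p + p' * Y1) * T) * (r + r' * X1) =
      s * 1 * r + s * X1 * r' + (s' * Y1 * r + s' * (Y1 * X1) * r') +
      (p * T * r + p * (T * X1) * r' + (p' * (Y1 * T) * r + p' * (Y1 * (T * X1)) * r')) := by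
    rw [h.symX_X1 hr']
    simp only [mul_add, add_mul, mul_one, mul_assoc]; abel
  rw [expand]
  simp only [mul_add e, add_mul _ _ e]
  rw [h.pull hs hr, h.pull hs hr', h.pull hs' hr, h.pull hs' hr', h.pull hp hr, h.pull hp hr',
    h.pull hp' hr, h.pull hp' hr']
  exact add_mem (add_mem (add_mem (one s hs r hr) (mX s hs r' hr'))
    (add_mem (mY s' hs' r hr) (mYX s' hs' r' hr')))
    (add_mem (add_mem (mT p hp r hr) (mTX p hp r' hr'))
      (add_mem (mYT p' hp' r hr) (mYTX p' hp' r' hr')))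

lemma sph_mem_all {J : Submodule ℂ R}
    (J0 : ∀ s ∈ symAlg Y1 Y2 Y1i Y2i, ∀ r ∈ symAlg X1 X2 X1i X2i, s * eG t T * r ∈ J)
    (J1 : ∀ s ∈ symAlg Y1 Y2 Y1i Y2i, ∀ r ∈ symAlg X1 X2 X1i X2i,
      s * (eG t T * ((t⁻¹ ^ 2) • (Y1 * X1) + Y2 * X2) * eG t T) * r ∈ J)
    {y : R} (hy : y ∈ Algebra.adjoin ℂ {T, Ti, X1, X1i, X2, X2i, Y1, Y1i, Y2, Y2i}) :
    eG t T * y * eG t T ∈ J := by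
  have := h.mem_prod hy
  clear hy
  induction this using Submodule.mul_induction_on' with
  | mem_mul_mem a ha b hb => exact h.sph_mem J0 J1 ha hb
  | add x _ y _ h1 h2 => rw [mul_add, add_mul]; exact add_mem h1 h2

end DH

lemma zp_units (u : Rˣ) (n : ℤ) : zp (u : R) (↑u⁻¹ : R) n = ((u ^ n : Rˣ) : R) := by
  cases n with
  | ofNat n => simp [zp]
  | negSucc n => simp [zp, zpow_negSucc]

lemma symAlg_eq_span {A B Ai Bi : R} (h1 : A * Ai = 1) (h2 : Ai * A = 1) (h3 : B * Bi = 1)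
    (h4 : Bi * B = 1) (hAB : A * B = B * A) {a : R} (ha : a ∈ symAlg A B Ai Bi) :
    a ∈ Submodule.span ℂ (Set.range fun i : ℕ × ℤ => (A + B) ^ i.1 * zp (A * B) (Ai * Bi) i.2) := by
  let u : Rˣ := ⟨A * B, Ai * Bi, prod_inv' h1 h3 hAB, prod_inv'' h2 h4 hAB⟩
  have hc : Commute (A + B) (A * B) := by
    change (A + B) * (A * B) = (A * B) * (A + B)
    simp only [mul_add, add_mul]
    rw [mul_assoc A B A, ← hAB, mul_assoc A B B, ← mul_assoc B A B, ← hAB, mul_assoc]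
  have hcu : ∀ n : ℤ, Commute (A + B) ((u ^ n : Rˣ) : R) := fun n =>
    Commute.units_zpow_right (show Commute (A + B) (u : R) from hc) n
  have hz : ∀ n : ℤ, zp (A * B) (Ai * Bi) n = ((u ^ n : Rˣ) : R) := fun n => zp_units u n
  have key : ∀ x ∈ Submonoid.closure {A + B, A * B, Ai * Bi}, ∃ (i : ℕ) (n : ℤ),
      x = (A + B) ^ i * ((u ^ n : Rˣ) : R) := by
    intro x hx
    induction hx using Submonoid.closure_induction with
    | mem x hx =>
      rcases hx with rfl | rfl | rfl
      · exact ⟨1, 0, by simp⟩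
      · exact ⟨0, 1, by simp [u]⟩
      · exact ⟨0, -1, by simp [u]⟩
    | one => exact ⟨0, 0, by simp⟩
    | mul x y _ _ hx hy =>
      obtain ⟨i, n, rfl⟩ := hx
      obtain ⟨j, m, rfl⟩ := hy
      refine ⟨i + j, n + m, ?_⟩
      rw [pow_add, zpow_add, Units.val_mul]
      have := ((hcu n).pow_left j).eq
      simp only [mul_assoc]
      rw [← mul_assoc _ ((A + B) ^ j), ← this]; simp only [mul_assoc]
  have ha' : a ∈ Submodule.span ℂ (Submonoid.closure {A + B, A * B, Ai * Bi} : Set R) := by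
    rw [← Algebra.adjoin_eq_span]; exact ha
  refine Submodule.span_mono ?_ ha'
  intro x hx
  obtain ⟨i, n, rfl⟩ := key x hx
  exact ⟨(i, n), by simp [hz]⟩

end spherical

lemma span_bilin {R : Type*} [Ring R] [Algebra ℂ R] {A B : Set R} {w : R} {J : Submodule ℂ R}
    (hJ : ∀ a ∈ A, ∀ b ∈ B, a * w * b ∈ J) {s r : R} (hs : s ∈ Submodule.span ℂ A)
    (hr : r ∈ Submodule.span ℂ B) : s * w * r ∈ J := by
  induction hs using Submodule.span_induction with
  | mem a ha =>
    induction hr using Submodule.span_induction with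
    | mem b hb => exact hJ a ha b hb
    | zero => simp
    | add x y _ _ h1 h2 => rw [mul_add]; exact add_mem h1 h2
    | smul c x _ h1 => rw [mul_smul_comm]; exact J.smul_mem _ h1
  | zero => simp
  | add x y _ _ h1 h2 => rw [add_mul, add_mul]; exact add_mem h1 h2
  | smul c x _ h1 => rw [smul_mul_assoc, smul_mul_assoc]; exact J.smul_mem _ h1

lemma daha_top (q t : ℂ) (y : DAHA q t) : y ∈ Algebra.adjoin ℂ {T q t, Ti q t, X1 q t, X1i q t,
    X2 q t, X2i q t, Y1 q t, Y1i q t, Y2 q t, Y2i q t} := by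
  obtain ⟨z, rfl⟩ := RingQuot.mkAlgHom_surjective ℂ (DRel q t) y
  induction z using FreeAlgebra.induction with
  | grade0 r => rw [AlgHom.commutes]; exact Subalgebra.algebraMap_mem _ r
  | grade1 g =>
    apply Algebra.subset_adjoin
    cases g <;> simp [T, Ti, X1, X1i, X2, X2i, Y1, Y1i, Y2, Y2i, gD]
  | mul a b ha hb => rw [map_mul]; exact mul_mem ha hb
  | add a b ha hb => rw [map_add]; exact add_mem ha hb

lemma pbw_pull (q t : ℂ) (hq : q ≠ 0) (ht : t ≠ 0) (ht2 : t ^ 2 ≠ -1)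
    (i : ℕ × ℤ × Fin 2 × ℕ × ℤ) :
    pbwSph q t i = ((Y1 q t + Y2 q t) ^ i.1 * zp (Y1 q t * Y2 q t) (Y1i q t * Y2i q t) i.2.1) *
      (eSym q t * ((t⁻¹ ^ 2) • (Y1 q t * X1 q t) + Y2 q t * X2 q t) ^ (i.2.2.1 : ℕ) * eSym q t) *
      ((X1 q t + X2 q t) ^ i.2.2.2.1 *
        zp (X1 q t * X2 q t) (X1i q t * X2i q t) i.2.2.2.2) := by
  have h := DH_main q t hq ht ht2
  have zmem : ∀ (A B Ai Bi : DAHA q t) (n : ℤ), zp (A * B) (Ai * Bi) n ∈ symAlg A B Ai Bi := by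
    intro A B Ai Bi n
    cases n with
    | ofNat n => exact pow_mem (symAlg_mul _ _ _ _) _
    | negSucc n => exact pow_mem (symAlg_inv _ _ _ _) _
  have := h.pull (w := ((t⁻¹ ^ 2) • (Y1 q t * X1 q t) + Y2 q t * X2 q t) ^ (i.2.2.1 : ℕ))
    (mul_mem (pow_mem (symAlg_add (Y1 q t) (Y2 q t) (Y1i q t) (Y2i q t)) i.1)
      (zmem (Y1 q t) (Y2 q t) (Y1i q t) (Y2i q t) i.2.1))
    (mul_mem (pow_mem (symAlg_add (X1 q t) (X2 q t) (X1i q t) (X2i q t)) i.2.2.2.1)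
      (zmem (X1 q t) (X2 q t) (X1i q t) (X2i q t) i.2.2.2.2))
  change eSym q t * _ * eSym q t = _ * (eSym q t * _ * eSym q t) * _ at this
  rw [← this, pbwSph]
  simp only [mul_assoc]

lemma span_main (q t : ℂ) (hq : q ≠ 0) (ht : t ≠ 0) (ht2 : t ^ 2 ≠ -1) :
    Submodule.span ℂ (Set.range (pbwSph q t)) = sDAHA q t := by
  have h := DH_main q t hq ht ht2
  apply le_antisymm
  · rw [Submodule.span_le]
    rintro _ ⟨i, rfl⟩
    exact ⟨_, (mul_assoc _ _ _).symm⟩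
  · rintro _ ⟨y, rfl⟩
    have hy := daha_top q t y
    have e1 : ((LinearMap.mulLeft ℂ (eSym q t)).comp (LinearMap.mulRight ℂ (eSym q t))) y =
        eSym q t * y * eSym q t := by simp [mul_assoc]
    rw [e1]
    have hee : eSym q t * eSym q t = eSym q t := h.ee
    refine h.sph_mem_all ?_ ?_ hy
    · intro s hs r hr
      refine span_bilin ?_ (symAlg_eq_span h.Y1Y1i h.Y1iY1 h.Y2Y2i h.Y2iY2 h.Ycomm hs)
        (symAlg_eq_span h.X1X1i h.X1iX1 h.X2X2i h.X2iX2 h.Xcomm hr)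
      rintro _ ⟨⟨a1, a2⟩, rfl⟩ _ ⟨⟨b1, b2⟩, rfl⟩
      apply Submodule.subset_span
      refine ⟨(a1, a2, 0, b1, b2), ?_⟩
      rw [pbw_pull q t hq ht ht2]
      simp only [Fin.val_zero, pow_zero, mul_one, hee]
      rfl
    · intro s hs r hr
      refine span_bilin ?_ (symAlg_eq_span h.Y1Y1i h.Y1iY1 h.Y2Y2i h.Y2iY2 h.Ycomm hs)
        (symAlg_eq_span h.X1X1i h.X1iX1 h.X2X2i h.X2iX2 h.Xcomm hr)
      rintro _ ⟨⟨a1, a2⟩, rfl⟩ _ ⟨⟨b1, b2⟩, rfl⟩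
      apply Submodule.subset_span
      refine ⟨(a1, a2, 1, b1, b2), ?_⟩
      rw [pbw_pull q t hq ht ht2]
      simp only [Fin.val_one, pow_one]
      rfl


/-! ### The difference-operator representation -/

abbrev VV : Type := ℤ → ℤ → Bool → ℂ

/-- value of a formal point -/
def vv (q : ℂ) (x : Bool → ℂ) (m : ℤ) (b : Bool) : ℂ := (q ^ 2) ^ m * x b

def gam (t a b : ℂ) : ℂ := (t * a - t⁻¹ * b) / (a - b)

structure Gen (q t : ℂ) (x : Bool → ℂ) : Prop where
  ne : ∀ b, x b ≠ 0
  sep : ∀ m n b, vv q x m b ≠ vv q x n (!b)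
  sept : ∀ m n b, t * vv q x m b ≠ t⁻¹ * vv q x n (!b)

def oT (q t : ℂ) (x : Bool → ℂ) : Module.End ℂ VV where
  toFun f := fun m n b => t * f m n b +
    gam t (vv q x m b) (vv q x n (!b)) * (f n m (!b) - f m n b)
  map_add' f g := by ext m n b; simp; ring
  map_smul' c f := by ext m n b; simp; ring

def oX1 (q : ℂ) (x : Bool → ℂ) : Module.End ℂ VV where
  toFun f := fun m n b => vv q x m b * f m n b
  map_add' f g := by ext m n b; simp; ring
  map_smul' c f := by ext m n b; simp; ring

def oX2 (q : ℂ) (x : Bool → ℂ) : Module.End ℂ VV where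
  toFun f := fun m n b => vv q x n (!b) * f m n b
  map_add' f g := by ext m n b; simp; ring
  map_smul' c f := by ext m n b; simp; ring

def oX1i (q : ℂ) (x : Bool → ℂ) : Module.End ℂ VV where
  toFun f := fun m n b => (vv q x m b)⁻¹ * f m n b
  map_add' f g := by ext m n b; simp; ring
  map_smul' c f := by ext m n b; simp; ring

def oX2i (q : ℂ) (x : Bool → ℂ) : Module.End ℂ VV where
  toFun f := fun m n b => (vv q x n (!b))⁻¹ * f m n b
  map_add' f g := by ext m n b; simp; ring
  map_smul' c f := by ext m n b; simp; ring

def oP : Module.End ℂ VV where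
  toFun f := fun m n b => f (n + 1) m (!b)
  map_add' f g := by ext m n b; simp
  map_smul' c f := by ext m n b; simp

def oPi : Module.End ℂ VV where
  toFun f := fun m n b => f n (m - 1) (!b)
  map_add' f g := by ext m n b; simp
  map_smul' c f := by ext m n b; simp

def oTi (q t : ℂ) (x : Bool → ℂ) : Module.End ℂ VV := oT q t x - (t - t⁻¹) • 1

lemma vv_ne {q t : ℂ} (hq : q ≠ 0) {x : Bool → ℂ} (hx : Gen q t x) (m b) : vv q x m b ≠ 0 :=
  mul_ne_zero (zpow_ne_zero _ (pow_ne_zero _ hq)) (hx.ne b)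

lemma vv_succ {q : ℂ} (hq : q ≠ 0) (x : Bool → ℂ) (m b) :
    vv q x (m + 1) b = q ^ 2 * vv q x m b := by
  unfold vv; rw [zpow_add_one₀ (pow_ne_zero _ hq)]; ring

lemma gam_shift {q : ℂ} (hq : q ≠ 0) (t : ℂ) (a b : ℂ) :
    gam t (q ^ 2 * a) (q ^ 2 * b) = gam t a b := by
  unfold gam
  rw [← mul_sub, show t * (q ^ 2 * a) - t⁻¹ * (q ^ 2 * b) = q ^ 2 * (t * a - t⁻¹ * b) by ring,
    mul_div_mul_left _ _ (pow_ne_zero _ hq)]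

lemma gam_add {t a b : ℂ} (h : a ≠ b) : gam t a b + gam t b a = t + t⁻¹ := by
  unfold gam
  have h1 : a - b ≠ 0 := sub_ne_zero.2 h
  have h2 : b - a ≠ 0 := sub_ne_zero.2 h.symm
  rw [div_add_div _ _ h1 h2, div_eq_iff (mul_ne_zero h1 h2)]; ring

lemma gam_mul {t a b : ℂ} (h : a ≠ b) : gam t a b * (a - b) = t * a - t⁻¹ * b := by
  unfold gam
  exact div_mul_cancel₀ _ (sub_ne_zero.2 h)

section relsO
variable {q t : ℂ} (hq : q ≠ 0) (ht : t ≠ 0) {x : Bool → ℂ} (hx : Gen q t x)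
include hx

lemma oTT (ht : t ≠ 0) : oT q t x * oT q t x = (t - t⁻¹) • oT q t x + 1 := by
  ext f m n b
  have h := gam_add (t := t) (hx.sep m n b)
  simp only [oT, Module.End.mul_apply, LinearMap.coe_mk, AddHom.coe_mk, Bool.not_not,
    LinearMap.add_apply, LinearMap.smul_apply, Pi.add_apply, Pi.smul_apply, smul_eq_mul,
    Module.End.one_apply]
  rw [show gam t (vv q x n (!b)) (vv q x m b) = t + t⁻¹ - gam t (vv q x m b) (vv q x n (!b)) by
    linear_combination h]
  have := mul_inv_cancel₀ ht
  linear_combination this * f m n b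

lemma oTX1 : oT q t x * oX1 q x = oX2 q x * oTi q t x := by
  ext f m n b
  have h := gam_mul (t := t) (hx.sep m n b)
  simp only [oT, oTi, oX1, oX2, Module.End.mul_apply, LinearMap.coe_mk, AddHom.coe_mk,
    LinearMap.sub_apply, LinearMap.smul_apply, Pi.sub_apply, Pi.smul_apply, smul_eq_mul,
    Module.End.one_apply]
  linear_combination -h * f m n b
end relsO

lemma oX1P (q : ℂ) (x : Bool → ℂ) : oX1 q x * oP = oP * oX2 q x := by
  ext f m n b
  simp [oP, oX1, oX2]

lemma oPX1 {q : ℂ} (hq : q ≠ 0) (x : Bool → ℂ) : oP * oX1 q x = (q ^ 2) • (oX2 q x * oP) := by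
  ext f m n b
  simp [oP, oX1, oX2, vv_succ hq]; ring

lemma oPPi : oP * oPi = 1 := by
  ext f m n b
  simp [oP, oPi]

lemma oPiP : oPi * oP = 1 := by
  ext f m n b
  simp [oP, oPi]

lemma oPPT {q : ℂ} (hq : q ≠ 0) (t : ℂ) (x : Bool → ℂ) :
    oP * oP * oT q t x = oT q t x * (oP * oP) := by
  ext f m n b
  simp [oP, oT, vv_succ hq, gam_shift hq]

lemma oX12 (q : ℂ) (x : Bool → ℂ) : oX1 q x * oX2 q x = oX2 q x * oX1 q x := by
  ext f m n b
  simp [oX1, oX2]; ring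

lemma oXXT (q t : ℂ) (x : Bool → ℂ) :
    oX1 q x * oX2 q x * oT q t x = oT q t x * (oX1 q x * oX2 q x) := by
  ext f m n b
  simp [oX1, oX2, oT]; ring

section inv
variable {q t : ℂ} (hq : q ≠ 0) {x : Bool → ℂ} (hx : Gen q t x)
include hq hx
lemma oX1X1i : oX1 q x * oX1i q x = 1 := by
  ext f m n b; simp [oX1, oX1i, vv_ne hq hx]
lemma oX1iX1 : oX1i q x * oX1 q x = 1 := by
  ext f m n b; simp [oX1, oX1i, vv_ne hq hx]
lemma oX2X2i : oX2 q x * oX2i q x = 1 := by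
  ext f m n b; simp [oX2, oX2i, vv_ne hq hx]
lemma oX2iX2 : oX2i q x * oX2 q x = 1 := by
  ext f m n b; simp [oX2, oX2i, vv_ne hq hx]
end inv

lemma oTTi {q t : ℂ} {x : Bool → ℂ} (hx : Gen q t x) (ht : t ≠ 0) :
    oT q t x * oTi q t x = 1 := by
  rw [oTi, mul_sub, oTT hx ht]; simp
lemma oTiT {q t : ℂ} {x : Bool → ℂ} (hx : Gen q t x) (ht : t ≠ 0) :
    oTi q t x * oT q t x = 1 := by
  rw [oTi, sub_mul, oTT hx ht]; simp

def oGen (q t : ℂ) (x : Bool → ℂ) : DGen → Module.End ℂ VV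
  | .T => oT q t x
  | .Ti => oTi q t x
  | .X1 => oX1 q x
  | .X1i => oX1i q x
  | .X2 => oX2 q x
  | .X2i => oX2i q x
  | .Y1 => oT q t x * oP
  | .Y1i => oPi * oTi q t x
  | .Y2 => oP * oTi q t x
  | .Y2i => oT q t x * oPi

lemma oGen_rel {q t : ℂ} (hq : q ≠ 0) (ht : t ≠ 0) {x : Bool → ℂ} (hx : Gen q t x)
    ⦃a b : FD⦄ (h : DRel q t a b) :
    FreeAlgebra.lift ℂ (oGen q t x) a = FreeAlgebra.lift ℂ (oGen q t x) b := by
  have TTi := oTTi hx ht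
  have TiT := oTiT hx ht
  have TTi' := fun y : Module.End ℂ VV => mul_assoc (oT q t x) (oTi q t x) y
  have X11 := oX1X1i hq hx
  have X11' := oX1iX1 hq hx
  have c1 : ∀ y, oT q t x * (oTi q t x * y) = y := fun y => by rw [← mul_assoc, TTi, one_mul]
  have c2 : ∀ y, oTi q t x * (oT q t x * y) = y := fun y => by rw [← mul_assoc, TiT, one_mul]
  have c3 : ∀ y, oP * (oPi * y) = y := fun y => by rw [← mul_assoc, oPPi, one_mul]
  have c4 : ∀ y, oPi * (oP * y) = y := fun y => by rw [← mul_assoc, oPiP, one_mul]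
  induction h <;> simp only [gD, map_mul, map_add, map_sub, map_one, map_smul, map_zero,
    FreeAlgebra.lift_ι_apply, AlgHom.commutes, oGen]
  case TTi => exact TTi
  case TiT => exact TiT
  case X1X1i => exact X11
  case X1iX1 => exact X11'
  case X2X2i => exact oX2X2i hq hx
  case X2iX2 => exact oX2iX2 hq hx
  case Y1Y1i => simp only [mul_assoc, c3, TTi]
  case Y1iY1 => simp only [mul_assoc, c2, oPiP]
  case Y2Y2i => simp only [mul_assoc, c2, oPPi]
  case Y2iY2 => simp only [mul_assoc, c4, TTi]
  case TX1T => rw [oTX1 hx, mul_assoc, TiT, mul_one]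
  case TiY1Ti => rw [← mul_assoc, TiT, one_mul]
  case Xcomm => exact oX12 q x
  case Ycomm =>
    have h := oPPT hq t x
    have : oT q t x * oP * (oP * oTi q t x) = (oT q t x * (oP * oP)) * oTi q t x := by
      simp only [mul_assoc]
    rw [this, ← h]
    simp only [mul_assoc, TTi, mul_one, c2]
  case YXX =>
    have h1 : oP * (oX1 q x * oX2 q x) = (q ^ 2) • (oX1 q x * oX2 q x * oP) := by
      rw [← mul_assoc, oPX1 hq, smul_mul_assoc, mul_assoc, ← oX1P, ← mul_assoc, ← oX12]
    rw [mul_assoc, h1, mul_smul_comm, ← mul_assoc, ← oXXT, mul_assoc]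
  case X1iY2 =>
    have h1 : oX1i q x * oP = oP * oX2i q x := by
      calc oX1i q x * oP = oX1i q x * (oP * oX2 q x) * oX2i q x := by
            rw [mul_assoc, mul_assoc, oX2X2i hq hx, mul_one]
        _ = _ := by rw [← oX1P, ← mul_assoc, X11', one_mul]
    have h2 : oX2i q x * oT q t x = oTi q t x * oX1i q x := by
      have h3 := oTX1 (q := q) hx
      have h4 : oX1 q x * oT q t x = oTi q t x * oX2 q x := by
        calc oX1 q x * oT q t x = oTi q t x * (oT q t x * oX1 q x) * oT q t x := by rw [c2]
          _ = _ := by rw [h3, mul_assoc, mul_assoc, TiT, mul_one]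
      calc oX2i q x * oT q t x = oX2i q x * (oT q t x * oX1 q x) * oX1i q x := by
            rw [mul_assoc, mul_assoc, X11, mul_one]
        _ = _ := by rw [h3, ← mul_assoc, oX2iX2 hq hx, one_mul]
    have h5 : oX2i q x = oTi q t x * oX1i q x * oTi q t x := by
      rw [← h2, mul_assoc, TTi, mul_one]
    rw [← mul_assoc, h1, h5]; simp only [mul_assoc]
  case hecke =>
    rw [mul_sub, add_mul, oTT hx ht]
    simp only [Algebra.algebraMap_eq_smul_one, smul_mul_assoc, one_mul, mul_smul_comm, mul_one,
      smul_add, smul_smul, add_mul]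
    rw [mul_inv_cancel₀ ht]
    module

def rho {q t : ℂ} (hq : q ≠ 0) (ht : t ≠ 0) {x : Bool → ℂ} (hx : Gen q t x) :
    DAHA q t →ₐ[ℂ] Module.End ℂ VV :=
  RingQuot.liftAlgHom ℂ ⟨FreeAlgebra.lift ℂ (oGen q t x), oGen_rel hq ht hx⟩

lemma rho_mk {q t : ℂ} (hq : q ≠ 0) (ht : t ≠ 0) {x : Bool → ℂ} (hx : Gen q t x) (g : DGen) :
    rho hq ht hx (RingQuot.mkAlgHom ℂ (DRel q t) (gD g)) = oGen q t x g := by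
  simp [rho, gD]


/-! ### Independence of symmetric Laurent monomials on generic points -/

structure GenP (q t C D : ℂ) : Prop where
  C0 : C ≠ 0
  D0 : D ≠ 0
  s1 : ∀ k : ℤ, (q ^ 2) ^ k * C ≠ D
  s2 : ∀ k : ℤ, (q ^ 2) ^ k * (t ^ 2 * C) ≠ D
  s3 : ∀ k : ℤ, (q ^ 2) ^ k * (t ^ 2 * D) ≠ C

lemma GenP.symm {q t C D : ℂ} (hq : q ≠ 0) (h : GenP q t C D) : GenP q t D C where
  C0 := h.D0
  D0 := h.C0
  s1 k e := h.s1 (-k) (by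
    rw [← e, ← mul_assoc, ← zpow_add₀ (pow_ne_zero 2 hq)]; simp)
  s2 := h.s3
  s3 := h.s2

def chi (n : ℤ) : ℂˣ →* ℂ := (Units.coeHom ℂ).comp (zpowGroupHom n)

lemma chi_apply (n : ℤ) (p : ℂˣ) : chi n p = (p : ℂ) ^ n := by simp [chi]

lemma chi_inj : Function.Injective chi := by
  intro m n hmn
  have h := DFunLike.congr_fun hmn (Units.mk0 (2 : ℂ) two_ne_zero)
  rw [chi_apply, chi_apply] at h
  simp only [Units.val_mk0] at h
  have h2 : ((2 : ℝ) : ℝ) ^ m = 2 ^ n := by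
    apply Complex.ofReal_injective; push_cast; exact h
  exact zpow_right_injective₀ (by norm_num) (by norm_num) h2

lemma laurent_indep {ι : Type*} (s : Finset ι) (g : ι → ℂ) (β : ι → ℤ)
    (hβ : Set.InjOn β s) (h : ∀ p : ℂ, p ≠ 0 → ∑ i ∈ s, g i * p ^ β i = 0) :
    ∀ i ∈ s, g i = 0 := by
  have li := (linearIndependent_monoidHom ℂˣ ℂ).comp
    (fun i : (s : Set ι) => chi (β i)) (fun a b e => by
      exact Subtype.ext (hβ a.2 b.2 (chi_inj e)))
  have li2 : LinearIndepOn ℂ (fun i => (chi (β i) : ℂˣ → ℂ)) (s : Set ι) := li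
  rw [linearIndepOn_finset_iff] at li2
  apply li2
  ext p
  simpa [chi_apply] using h p p.ne_zero

lemma sym_indep {ι : Type*} {q t : ℂ} (hq : q ≠ 0) (ht : t ≠ 0) (s : Finset ι) (g : ι → ℂ)
    (β : ι → ℕ × ℤ) (hβ : Set.InjOn β s)
    (h : ∀ C D, GenP q t C D → ∑ i ∈ s, g i * ((C + D) ^ (β i).1 * (C * D) ^ (β i).2) = 0) :
    ∀ i ∈ s, g i = 0 := by
  classical
  have step : ∀ p : ℂ, p ≠ 0 → ∀ n : ℕ,
      ∑ i ∈ s with (β i).1 = n, g i * p ^ (β i).2 = 0 := by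
    intro p hp n
    let f : Polynomial ℂ :=
      ∑ i ∈ s, Polynomial.monomial (β i).1 (g i * p ^ (β i).2)
    -- the bad set
    let bad : Set ℂ := ⋃ k : ℤ, ⋃ j : Fin 3,
      {S | ∃ C, C ≠ 0 ∧ (q ^ 2) ^ k * (![1, t ^ 2, (t ^ 2)⁻¹] j * C) = p / C ∧ S = C + p / C}
    have hbad : bad.Countable := by
      refine Set.countable_iUnion fun k => Set.countable_iUnion fun j => ?_
      set μ := (q ^ 2) ^ k * ![1, t ^ 2, (t ^ 2)⁻¹] j with hμ
      have hfin : {C : ℂ | μ * C ^ 2 = p}.Finite := by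
        have hne : (Polynomial.C μ * Polynomial.X ^ 2 - Polynomial.C p : Polynomial ℂ) ≠ 0 := by
          intro e
          have := congrArg (Polynomial.eval 0) e
          simp at this
          exact hp this
        refine (Polynomial.finite_setOfPred_isRoot hne).subset ?_
        intro C hC
        simp only [Set.mem_ofPred_eq, Polynomial.IsRoot.def] at hC ⊢
        simp [hC]
      refine (hfin.image fun C => C + p / C).countable.mono ?_
      rintro S ⟨C, hC, e, rfl⟩
      refine ⟨C, ?_, rfl⟩
      rw [eq_div_iff hC] at e
      rw [Set.mem_ofPred_eq, ← e, hμ]; ring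
    have hroot : ∀ S ∉ bad, f.IsRoot S := by
      intro S hS
      obtain ⟨C, hC⟩ := IsAlgClosed.exists_root
        (Polynomial.X ^ 2 - Polynomial.C S * Polynomial.X + Polynomial.C p :
          Polynomial ℂ) (by
            have : (Polynomial.X ^ 2 - Polynomial.C S * Polynomial.X + Polynomial.C p :
              Polynomial ℂ).degree = 2 := by compute_degree!
            rw [this]; norm_num)
      simp only [Polynomial.IsRoot.def, Polynomial.eval_add, Polynomial.eval_sub, Polynomial.eval_pow,
        Polynomial.eval_X, Polynomial.eval_mul, Polynomial.eval_C] at hC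
      have hC0 : C ≠ 0 := by
        rintro rfl; apply hp; simpa using hC
      have hSC : S = C + p / C := by
        field_simp; linear_combination -hC
      have hP : C * (p / C) = p := by field_simp
      have hD0 : p / C ≠ 0 := div_ne_zero hp hC0
      have nb : ∀ (k : ℤ) (j : Fin 3),
          (q ^ 2) ^ k * (![1, t ^ 2, (t ^ 2)⁻¹] j * C) ≠ p / C := by
        intro k j e
        exact hS (Set.mem_iUnion.2 ⟨k, Set.mem_iUnion.2 ⟨j, C, hC0, e, hSC⟩⟩)
      have hgen : GenP q t C (p / C) := by
        refine ⟨hC0, hD0, fun k => ?_, fun k => ?_, fun k e => ?_⟩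
        · simpa using nb k 0
        · simpa using nb k 1
        · refine nb (-k) 2 ?_
          have hq2 : ((q ^ 2) ^ k : ℂ) ≠ 0 := zpow_ne_zero _ (pow_ne_zero 2 hq)
          have ht2 : t ^ 2 ≠ 0 := pow_ne_zero 2 ht
          nth_rewrite 1 [← e]
          rw [zpow_neg]
          simp only [Matrix.cons_val]
          generalize p / C = D at *
          field_simp
      have := h C (p / C) hgen
      rw [← hSC, hP] at this
      simp only [f, Polynomial.IsRoot.def, Polynomial.eval_finsetSum, Polynomial.eval_monomial]
      rw [← this]
      exact Finset.sum_congr rfl fun i _ => by ring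
    have hf : f = 0 := by
      by_contra hne
      have h1 := (Polynomial.finite_setOfPred_isRoot hne).countable
      have h2 : (Set.univ : Set ℂ).Countable := (h1.union hbad).mono fun S _ => by
        by_cases hS : S ∈ bad
        · exact Or.inr hS
        · exact Or.inl (hroot S hS)
      exact not_countable_complex h2
    have := congrArg (fun r => Polynomial.coeff r n) hf
    simp only [f, Polynomial.finsetSum_coeff, Polynomial.coeff_monomial,
      Polynomial.coeff_zero] at this
    rw [Finset.sum_filter]; exact this
  intro i hi
  refine laurent_indep (s.filter fun j => (β j).1 = (β i).1) g (fun j => (β j).2) ?_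
    (fun p hp => step p hp _) i (by simp [hi])
  intro a ha b hb e
  simp only [Finset.coe_filter, Set.mem_ofPred_eq] at ha hb
  exact hβ ha.1 hb.1 (Prod.ext (ha.2.trans hb.2.symm) e)


/-! ### Evaluation of the family in the representation -/

def SInv (f : VV) : Prop := ∀ m n b, f n m (!b) = f m n b
def Low (K : ℤ) (f : VV) : Prop := ∀ i < K, ∀ j, f i j false = 0

section evalu
variable {q t : ℂ} (hq : q ≠ 0) (ht : t ≠ 0) {x : Bool → ℂ} (hx : Gen q t x)

lemma rho_T : rho hq ht hx (T q t) = oT q t x := rho_mk hq ht hx .T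
lemma rho_X1 : rho hq ht hx (X1 q t) = oX1 q x := rho_mk hq ht hx .X1
lemma rho_X2 : rho hq ht hx (X2 q t) = oX2 q x := rho_mk hq ht hx .X2
lemma rho_X1i : rho hq ht hx (X1i q t) = oX1i q x := rho_mk hq ht hx .X1i
lemma rho_X2i : rho hq ht hx (X2i q t) = oX2i q x := rho_mk hq ht hx .X2i
lemma rho_Y1 : rho hq ht hx (Y1 q t) = oT q t x * oP := rho_mk hq ht hx .Y1
lemma rho_Y2 : rho hq ht hx (Y2 q t) = oP * oTi q t x := rho_mk hq ht hx .Y2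
lemma rho_Y1i : rho hq ht hx (Y1i q t) = oPi * oTi q t x := rho_mk hq ht hx .Y1i
lemma rho_Y2i : rho hq ht hx (Y2i q t) = oT q t x * oPi := rho_mk hq ht hx .Y2i

lemma oT_inv {f : VV} (hf : SInv f) : oT q t x f = t • f := by
  ext m n b; simp [oT, hf m n b]

lemma oTi_inv {f : VV} (hf : SInv f) : oTi q t x f = t⁻¹ • f := by
  rw [oTi, LinearMap.sub_apply, oT_inv hf]; simp; module

lemma rho_e_inv (ht2 : t ^ 2 ≠ -1) {f : VV} (hf : SInv f) : rho hq ht hx (eSym q t) f = f := by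
  have h1 : 1 + t ^ 2 ≠ 0 := fun e => ht2 (by linear_combination e)
  rw [eSym, map_smul, map_add, map_one, map_smul, rho_T]
  rw [LinearMap.smul_apply, LinearMap.add_apply, LinearMap.smul_apply, oT_inv hf,
    Module.End.one_apply, smul_smul]
  have : f + (t * t) • f = (1 + t ^ 2) • f := by module
  rw [this, smul_smul, inv_mul_cancel₀ h1, one_smul]

/-- the Macdonald-type operator -/
def mac (q t : ℂ) (x : Bool → ℂ) (f : VV) : VV := fun m n b =>
  gam t (vv q x m b) (vv q x n (!b)) * f (m + 1) n b +
    gam t (vv q x n (!b)) (vv q x m b) * f m (n + 1) b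

lemma mac_inv {f : VV} (hf : SInv f) : SInv (mac q t x f) := by
  intro m n b
  simp only [mac, Bool.not_not]
  rw [hf m (n + 1) b, hf (m + 1) n b]; ring

lemma rho_D {f : VV} (hf : SInv f) : rho hq ht hx (Y1 q t + Y2 q t) f = mac q t x f := by
  rw [map_add, rho_Y1, rho_Y2, LinearMap.add_apply, Module.End.mul_apply, Module.End.mul_apply,
    oTi_inv hf]
  ext m n b
  have h := gam_add (t := t) (hx.sep m n b)
  have h1 := hf m (n + 1) b
  have h2 := hf (m + 1) n b
  simp only [oT, oP, mac, LinearMap.coe_mk, AddHom.coe_mk, Pi.add_apply, Pi.smul_apply,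
    smul_eq_mul, Bool.not_not]
  rw [h1]
  linear_combination -h * f m (n + 1) b

def macW (q t : ℂ) (x : Bool → ℂ) (f : VV) : VV := fun m n b =>
  gam t (vv q x m b) (vv q x n (!b)) * (vv q x (m + 1) b * f (m + 1) n b) +
    gam t (vv q x n (!b)) (vv q x m b) * (vv q x (n + 1) (!b) * f m (n + 1) b)

lemma macW_inv {f : VV} (hf : SInv f) : SInv (macW q t x f) := by
  intro m n b
  simp only [macW, Bool.not_not]
  rw [hf m (n + 1) b, hf (m + 1) n b]; ring

lemma rho_W (ht2 : t ^ 2 ≠ -1) {f : VV} (hf : SInv f) :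
    rho hq ht hx (eSym q t * ((t⁻¹ ^ 2) • (Y1 q t * X1 q t) + Y2 q t * X2 q t) * eSym q t) f =
      macW q t x f := by
  have h := DH_main q t hq ht ht2
  have e : eSym q t * ((t⁻¹ ^ 2) • (Y1 q t * X1 q t) + Y2 q t * X2 q t) * eSym q t =
    (1 + t⁻¹ ^ 2) • (eSym q t * (Y1 q t * X1 q t) * eSym q t) := h.eWe
  have e2 : eSym q t * T q t = t • eSym q t := h.eT
  have h21 : 1 + t ^ 2 ≠ 0 := h.t21
  have e3 : rho hq ht hx (eSym q t) * oT q t x = t • rho hq ht hx (eSym q t) := by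
    rw [← rho_T hq ht hx, ← map_mul, e2, map_smul]
  have e4 : rho hq ht hx (eSym q t) = (1 + t ^ 2)⁻¹ • (1 + t • oT q t x) := by
    rw [eSym, map_smul, map_add, map_one, map_smul, rho_T]
  rw [e, map_smul, map_mul, map_mul, LinearMap.smul_apply, Module.End.mul_apply,
    rho_e_inv hq ht hx ht2 hf, map_mul, rho_Y1, rho_X1, mul_assoc, ← mul_assoc, e3, e4]
  ext m n b
  have hg := gam_add (t := t) (hx.sep m n b)
  have h1 := hf m (n + 1) b
  have h2 := hf (m + 1) n b
  simp only [oT, oP, oX1, macW, LinearMap.coe_mk, AddHom.coe_mk, Pi.add_apply, Pi.smul_apply,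
    smul_eq_mul, Bool.not_not, LinearMap.smul_apply, Module.End.mul_apply, LinearMap.add_apply,
    Module.End.one_apply]
  rw [h1]
  have hc : (1 + t⁻¹ ^ 2) * (t * (1 + t ^ 2)⁻¹) = t⁻¹ := by field_simp; ring
  have hg2 : gam t (vv q x n (!b)) (vv q x m b) =
    t + t⁻¹ - gam t (vv q x m b) (vv q x n (!b)) := by linear_combination hg
  rw [hg2]
  have h3 : t⁻¹ * t = 1 := inv_mul_cancel₀ ht
  generalize gam t (vv q x m b) (vv q x n (!b)) = γ
  generalize vv q x (n + 1) (!b) * f m (n + 1) b = A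
  generalize vv q x (m + 1) b * f (m + 1) n b = B
  linear_combination (A + t * (t * A + γ * (B - A))) * hc + (t * A + γ * (B - A)) * h3

lemma rho_E (f : VV) (m n b) : rho hq ht hx (Y1 q t * Y2 q t) f m n b = f (m + 1) (n + 1) b := by
  rw [map_mul, rho_Y1, rho_Y2, mul_assoc, ← mul_assoc oP oP, ← mul_assoc, ← oPPT hq, mul_assoc,
    oTTi hx ht, mul_one]
  simp [oP]

lemma rho_Ei (f : VV) (m n b) :
    rho hq ht hx (Y1i q t * Y2i q t) f m n b = f (m - 1) (n - 1) b := by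
  rw [map_mul, rho_Y1i, rho_Y2i, mul_assoc, ← mul_assoc _ _ oPi, oTiT hx ht, one_mul]
  simp [oPi]

lemma shift_pow {O : Module.End ℂ VV} {k : ℤ} (hO : ∀ f m n b, O f m n b = f (m + k) (n + k) b)
    (j : ℕ) : ∀ f m n b, (O ^ j) f m n b = f (m + j * k) (n + j * k) b := by
  induction j with
  | zero => simp
  | succ j ih =>
    intro f m n b
    rw [pow_succ, Module.End.mul_apply, ih, hO]
    push_cast
    congr 1 <;> ring

lemma rho_Ez (a : ℤ) (f : VV) (m n b) :
    rho hq ht hx (zp (Y1 q t * Y2 q t) (Y1i q t * Y2i q t) a) f m n b = f (m + a) (n + a) b := by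
  cases a with
  | ofNat j =>
    rw [zp, map_pow, shift_pow (k := 1) (rho_E hq ht hx)]; simp
  | negSucc j =>
    rw [zp, map_pow, shift_pow (k := -1) (fun f m n b => by rw [rho_Ei]; rfl)]
    congr 1 <;> (rw [Int.negSucc_eq]; push_cast; ring)

lemma mult_pow {O : Module.End ℂ VV} {u : ℤ → ℤ → Bool → ℂ}
    (hO : ∀ f m n b, O f m n b = u m n b * f m n b)
    (j : ℕ) : ∀ f m n b, (O ^ j) f m n b = u m n b ^ j * f m n b := by
  induction j with
  | zero => simp
  | succ j ih =>
    intro f m n b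
    rw [pow_succ, Module.End.mul_apply, ih, hO]; ring

lemma rho_X (b1 : ℕ) (b2 : ℤ) (f : VV) (m n b) :
    rho hq ht hx ((X1 q t + X2 q t) ^ b1 * zp (X1 q t * X2 q t) (X1i q t * X2i q t) b2) f m n b =
    (vv q x m b + vv q x n (!b)) ^ b1 * (vv q x m b * vv q x n (!b)) ^ b2 * f m n b := by
  have h1 := mult_pow (O := rho hq ht hx (X1 q t + X2 q t))
    (u := fun m n b => vv q x m b + vv q x n (!b))
    (fun f m n b => by rw [map_add, rho_X1, rho_X2]; simp [oX1, oX2]; ring) b1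
  rw [map_mul, map_pow, Module.End.mul_apply, h1, mul_assoc]
  congr 1
  cases b2 with
  | ofNat j =>
    rw [zp, map_pow, mult_pow (u := fun m n b => vv q x m b * vv q x n (!b))
      (fun f m n b => by rw [map_mul, rho_X1, rho_X2]; simp [oX1, oX2]; ring)]
    simp
  | negSucc j =>
    rw [zp, map_pow, mult_pow (u := fun m n b => (vv q x m b * vv q x n (!b))⁻¹)
      (fun f m n b => by rw [map_mul, rho_X1i, rho_X2i]; simp [oX1i, oX2i]; ring)]
    rw [zpow_negSucc, inv_pow]

lemma rho_Dpow (a : ℕ) {f : VV} (hf : SInv f) :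
    rho hq ht hx ((Y1 q t + Y2 q t) ^ a) f = (mac q t x)^[a] f := by
  induction a generalizing f with
  | zero => simp
  | succ a ih =>
    rw [pow_succ, map_mul, Module.End.mul_apply, rho_D hq ht hx hf, ih (mac_inv hf),
      Function.iterate_succ_apply]

def GG (q t : ℂ) (x : Bool → ℂ) (d : ℤ) : ℂ := gam t (vv q x d false) (vv q x 0 true)

include hq in
lemma gam_GG (m n : ℤ) : gam t (vv q x m false) (vv q x n true) = GG q t x (m - n) := by
  have hn : (q ^ 2) ^ n ≠ 0 := zpow_ne_zero _ (pow_ne_zero _ hq)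
  have e1 : vv q x m false = (q ^ 2) ^ n * vv q x (m - n) false := by
    unfold vv; rw [← mul_assoc, ← zpow_add₀ (pow_ne_zero _ hq)]; congr 2; ring
  have e2 : vv q x n true = (q ^ 2) ^ n * vv q x 0 true := by simp [vv]
  rw [e1, e2, GG, gam, gam, ← mul_sub, mul_left_comm t, mul_left_comm t⁻¹, ← mul_sub,
    mul_div_mul_left _ _ hn]

include hx in
lemma GG_ne (d : ℤ) : GG q t x d ≠ 0 :=
  div_ne_zero (sub_ne_zero.2 (hx.sept d 0 false)) (sub_ne_zero.2 (hx.sep d 0 false))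

include hq in
lemma mac_low {f : VV} {K : ℤ} (hf : Low K f) : Low (K - 1) (mac q t x f) ∧
    ∀ j, mac q t x f (K - 1) j false = GG q t x (K - 1 - j) * f K j false := by
  constructor
  · intro i hi j
    simp only [mac]
    rw [hf _ (by omega), hf _ (by omega)]; simp
  · intro j
    simp only [mac, Bool.not_false]
    rw [hf (K - 1) (by omega), gam_GG hq]; simp

include hq in
lemma macW_low {f : VV} {K : ℤ} (hf : Low K f) : Low (K - 1) (macW q t x f) ∧
    ∀ j, macW q t x f (K - 1) j false = GG q t x (K - 1 - j) * (vv q x K false * f K j false) := by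
  constructor
  · intro i hi j
    simp only [macW]
    rw [hf _ (by omega), hf _ (by omega)]; simp
  · intro j
    simp only [macW, Bool.not_false]
    rw [hf (K - 1) (by omega), gam_GG hq]; simp

include hq in
lemma mac_iter (a : ℕ) {f : VV} {K : ℤ} (hf : Low K f) : Low (K - a) ((mac q t x)^[a] f) ∧
    ∀ j, (mac q t x)^[a] f (K - a) j false =
      (∏ r ∈ Finset.range a, GG q t x (K - a + r - j)) * f K j false := by
  induction a with
  | zero => simpa using hf
  | succ a ih =>
    obtain ⟨h1, h2⟩ := mac_low (t := t) (x := x) hq ih.1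
    rw [Function.iterate_succ_apply']
    have e : K - ((a + 1 : ℕ) : ℤ) = K - a - 1 := by push_cast; ring
    rw [e]
    refine ⟨h1, fun j => ?_⟩
    rw [h2, ih.2, Finset.prod_range_succ']
    have : ∀ r : ℕ, K - a - 1 + ((r + 1 : ℕ) : ℤ) - j = K - a + r - j := by
      intro r; push_cast; ring
    simp only [this]
    simp; ring

def del (K l : ℤ) : VV := fun m n b =>
  if (b = false ∧ m = K ∧ n = l) ∨ (b = true ∧ n = K ∧ m = l) then 1 else 0

lemma del_inv (K l : ℤ) : SInv (del K l) := by
  intro m n b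
  cases b <;> simp [del]

lemma del_low (K l : ℤ) : Low K (del K l) := by
  intro i hi j
  have : i ≠ K := by omega
  simp [del, this]

def kk (i : (ℕ × ℤ × Fin 2 × ℕ × ℤ)) : ℤ := i.1 + (i.2.2.1 : ℕ) + i.2.1

lemma mid_eval (ht2 : t ^ 2 ≠ -1) (ε : Fin 2) {f : VV} {K : ℤ} (hs : SInv f) (hf : Low K f) :
    ∃ f2, rho hq ht hx (eSym q t * ((t⁻¹ ^ 2) • (Y1 q t * X1 q t) + Y2 q t * X2 q t) ^ (ε : ℕ) *
      eSym q t) f = f2 ∧ SInv f2 ∧ Low (K - (ε : ℕ)) f2 ∧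
      ∀ j, f2 (K - (ε : ℕ)) j false =
        GG q t x (K - 1 - j) ^ (ε : ℕ) * vv q x K false ^ (ε : ℕ) * f K j false := by
  refine ⟨_, rfl, ?_⟩
  fin_cases ε
  · have : rho hq ht hx (eSym q t * ((t⁻¹ ^ 2) • (Y1 q t * X1 q t) + Y2 q t * X2 q t) ^ 0 *
      eSym q t) f = f := by
      rw [pow_zero, mul_one, map_mul, Module.End.mul_apply, rho_e_inv hq ht hx ht2 hs,
        rho_e_inv hq ht hx ht2 hs]
    simp only [this]
    simp [hs, hf]
  · have h := macW_low (t := t) (x := x) hq hf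
    simp only [pow_one, rho_W hq ht hx ht2 hs]
    refine ⟨macW_inv hs, by simpa using h.1, fun j => ?_⟩
    have := h.2 j
    simpa [mul_assoc] using this

lemma eval_pbw (ht2 : t ^ 2 ≠ -1) (i : (ℕ × ℤ × Fin 2 × ℕ × ℤ)) (K l : ℤ) :
    (kk i < K → rho hq ht hx (pbwSph q t i) (del K l) 0 0 false = 0) ∧
    (kk i = K → rho hq ht hx (pbwSph q t i) (del K l) 0 0 false =
      if i.2.1 = l then
      (∏ r ∈ Finset.range (i.1 + (i.2.2.1 : ℕ)), GG q t x r) * (vv q x K false ^ (i.2.2.1 : ℕ) *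
        ((vv q x K false + vv q x l true) ^ i.2.2.2.1 *
          (vv q x K false * vv q x l true) ^ i.2.2.2.2)) else 0) := by
  obtain ⟨a1, a2, ε, b1, b2⟩ := i
  rw [pbw_pull q t hq ht ht2]
  simp only [kk]
  rw [map_mul, map_mul, Module.End.mul_apply, Module.End.mul_apply]
  have hX := rho_X hq ht hx b1 b2 (del K l)
  set f1 := rho hq ht hx ((X1 q t + X2 q t) ^ b1 *
    zp (X1 q t * X2 q t) (X1i q t * X2i q t) b2) (del K l) with hf1
  have s1 : SInv f1 := by
    intro m n b
    rw [hX, hX, del_inv K l m n b, Bool.not_not, add_comm, mul_comm (vv q x n (!b))]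
  have l1 : Low K f1 := by
    intro i hi j
    rw [hX, del_low K l i hi j, mul_zero]
  obtain ⟨f2, e2, s2, l2, v2⟩ := mid_eval hq ht hx ht2 ε s1 l1
  rw [e2, map_mul, Module.End.mul_apply]
  have hE := rho_Ez hq ht hx a2 f2
  set f3 := rho hq ht hx (zp (Y1 q t * Y2 q t) (Y1i q t * Y2i q t) a2) f2 with hf3
  have s3 : SInv f3 := by
    intro m n b
    rw [hE, hE, s2]
  have l3 : Low (K - (ε : ℕ) - a2) f3 := by
    intro i hi j
    rw [hE]; exact l2 _ (by omega) _
  rw [rho_Dpow hq ht hx a1 s3]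
  obtain ⟨l4, v4⟩ := mac_iter (t := t) (x := x) hq a1 l3
  constructor
  · intro hk
    exact l4 0 (by omega) 0
  · intro hk
    have e0 : K - (ε : ℕ) - a2 - a1 = 0 := by omega
    have := v4 0
    rw [e0] at this
    rw [this, hE, sub_add_cancel, zero_add, v2, hX]
    have e1 : K - 1 - a2 = a1 + (ε : ℕ) - 1 := by omega
    by_cases hl : a2 = l
    · subst hl
      have ed : del K a2 K a2 false = 1 := by simp [del]
      rw [ed, e1, if_pos rfl]
      simp only [zero_add, sub_zero, Bool.not_false]
      have : (∏ r ∈ Finset.range (a1 + (ε : ℕ)), GG q t x r) =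
        (∏ r ∈ Finset.range a1, GG q t x r) * GG q t x (a1 + (ε : ℕ) - 1) ^ (ε : ℕ) := by
        fin_cases ε
        · simp
        · simp [Finset.prod_range_succ]
      rw [this]; ring
    · have ed : del K l K a2 false = 0 := by simp [del, hl]
      rw [ed, if_neg hl]; simp

end evalu

lemma gen_of {q t C D : ℂ} (hq : q ≠ 0) (ht : t ≠ 0) (h : GenP q t C D) (K l : ℤ) :
    Gen q t (fun b => cond b ((q ^ 2) ^ (-l) * D) ((q ^ 2) ^ (-K) * C)) := by
  have hq2 : q ^ 2 ≠ 0 := pow_ne_zero 2 hq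
  have hz : ∀ n : ℤ, (q ^ 2) ^ n ≠ 0 := fun n => zpow_ne_zero n hq2
  have key : ∀ (A B : ℂ) (m n k j : ℤ), (∀ k : ℤ, (q ^ 2) ^ k * A ≠ B) →
      (q ^ 2) ^ m * ((q ^ 2) ^ k * A) ≠ (q ^ 2) ^ n * ((q ^ 2) ^ j * B) := by
    intro A B m n k j hh e
    apply hh (m + k - n - j)
    rw [← mul_assoc, ← mul_assoc, ← zpow_add₀ hq2, ← zpow_add₀ hq2] at e
    rw [show m + k - n - j = (m + k) - (n + j) by ring, zpow_sub₀ hq2]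
    field_simp
    linear_combination e
  have key2 : ∀ (A B : ℂ) (m n k j : ℤ), (∀ k : ℤ, (q ^ 2) ^ k * (t ^ 2 * A) ≠ B) →
      t * ((q ^ 2) ^ m * ((q ^ 2) ^ k * A)) ≠ t⁻¹ * ((q ^ 2) ^ n * ((q ^ 2) ^ j * B)) := by
    intro A B m n k j hh e
    apply key (t ^ 2 * A) B m n k j hh
    have : t * t⁻¹ = 1 := mul_inv_cancel₀ ht
    linear_combination t * e + ((q ^ 2) ^ n * ((q ^ 2) ^ j * B)) * this
  have hs := h.symm hq
  refine ⟨?_, ?_, ?_⟩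
  · intro b; cases b
    · exact mul_ne_zero (hz _) h.C0
    · exact mul_ne_zero (hz _) h.D0
  · intro m n b; cases b
    · exact key _ _ _ _ _ _ h.s1
    · exact key _ _ _ _ _ _ hs.s1
  · intro m n b; cases b
    · exact key2 _ _ _ _ _ _ h.s2
    · exact key2 _ _ _ _ _ _ hs.s2

lemma indep_main (q t : ℂ) (hq : q ≠ 0) (ht : t ≠ 0) (ht2 : t ^ 2 ≠ -1) :
    LinearIndependent ℂ (pbwSph q t) := by
  classical
  have hq2 : q ^ 2 ≠ 0 := pow_ne_zero 2 hq
  rw [linearIndependent_iff']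
  intro s g hsum
  by_contra! hcon
  obtain ⟨i1, hi1, hgi1⟩ := hcon
  obtain ⟨i0, hi0, hmax⟩ := Finset.exists_max_image (s.filter (fun i => g i ≠ 0)) kk
    ⟨i1, by simp [hi1, hgi1]⟩
  rw [Finset.mem_filter] at hi0
  obtain ⟨hi0s, hg0⟩ := hi0
  set K := kk i0 with hK
  set l := i0.2.1 with hl
  let S : Finset (ℕ × ℤ × Fin 2 × ℕ × ℤ) := s.filter (fun i => kk i = K ∧ i.2.1 = l)
  have hmain : ∀ C D, GenP q t C D → ∑ i ∈ S, g i * (C ^ (i.2.2.1 : ℕ) *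
      ((C + D) ^ i.2.2.2.1 * (C * D) ^ i.2.2.2.2)) = 0 := by
    intro C D hCD
    have hx := gen_of hq ht hCD K l
    set x : Bool → ℂ := fun b => cond b ((q ^ 2) ^ (-l) * D) ((q ^ 2) ^ (-K) * C) with hxd
    have vC : vv q x K false = C := by
      simp only [vv, hxd, cond_false]; rw [← mul_assoc, ← zpow_add₀ hq2]; simp
    have vD : vv q x l true = D := by
      simp only [vv, hxd, cond_true]; rw [← mul_assoc, ← zpow_add₀ hq2]; simp
    have h1 := congrArg (fun y => rho hq ht hx y (del K l) 0 0 false) hsum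
    simp only [map_sum, map_smul, map_zero, LinearMap.sum_apply, Finset.sum_apply,
      LinearMap.smul_apply, Pi.smul_apply, smul_eq_mul, LinearMap.zero_apply,
      Pi.zero_apply] at h1
    set PP := ∏ r ∈ Finset.range (K - l).toNat, GG q t x r with hPP
    have hPP0 : PP ≠ 0 := Finset.prod_ne_zero_iff.2 fun r _ => GG_ne hx _
    have h2 : ∀ i ∈ s, g i * rho hq ht hx (pbwSph q t i) (del K l) 0 0 false =
        if kk i = K ∧ i.2.1 = l then PP * (g i * (C ^ (i.2.2.1 : ℕ) *
      ((C + D) ^ i.2.2.2.1 * (C * D) ^ i.2.2.2.2))) else 0 := by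
      intro i his
      obtain ⟨ev1, ev2⟩ := eval_pbw hq ht hx ht2 i K l
      by_cases hgi : g i = 0
      · simp [hgi]
      have hle := hmax i (by simp [his, hgi])
      rcases lt_or_eq_of_le hle with hlt | heq
      · rw [ev1 hlt, if_neg (fun hh => hlt.ne hh.1), mul_zero]
      · rw [ev2 heq, vC, vD]
        by_cases hil : i.2.1 = l
        · rw [if_pos hil, if_pos ⟨heq, hil⟩]
          have : (K - l).toNat = i.1 + (i.2.2.1 : ℕ) := by
            rw [← heq, ← hil]; simp only [kk]; omega
          rw [hPP, this]; ring
        · rw [if_neg hil, if_neg (fun hh => hil hh.2), mul_zero]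
    rw [Finset.sum_congr rfl h2, ← Finset.sum_filter, ← Finset.mul_sum] at h1
    exact (mul_eq_zero.1 h1).resolve_left hPP0
  have hsplit : ∀ C D, GenP q t C D → ∀ ε : Fin 2, ∑ i ∈ S with i.2.2.1 = ε, g i *
      ((C + D) ^ i.2.2.2.1 * (C * D) ^ i.2.2.2.2) = 0 := by
    intro C D hCD
    let F : Fin 2 → ℂ := fun ε => ∑ i ∈ S with i.2.2.1 = ε, g i *
      ((C + D) ^ i.2.2.2.1 * (C * D) ^ i.2.2.2.2)
    have hF : ∀ z : ℂ, ∑ i ∈ S, g i * (z ^ (i.2.2.1 : ℕ) *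
      ((C + D) ^ i.2.2.2.1 * (C * D) ^ i.2.2.2.2)) = F 0 + z * F 1 := by
      intro z
      rw [← Finset.sum_fiberwise S (fun i => i.2.2.1), Fin.sum_univ_two]
      congr 1
      · refine Finset.sum_congr rfl fun i hi => ?_
        rw [(Finset.mem_filter.1 hi).2]; simp
      · rw [Finset.mul_sum]
        refine Finset.sum_congr rfl fun i hi => ?_
        rw [(Finset.mem_filter.1 hi).2]; simp; ring
    have m1 := hmain C D hCD
    have m2 := hmain D C (hCD.symm hq)
    rw [add_comm D C, mul_comm D C] at m2
    rw [hF] at m1 m2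
    have hne : C - D ≠ 0 := sub_ne_zero.2 (by simpa using hCD.s1 0)
    have hF1 : F 1 = 0 := by
      have : (C - D) * F 1 = 0 := by linear_combination m1 - m2
      exact (mul_eq_zero.1 this).resolve_left hne
    have hF0 : F 0 = 0 := by rw [hF1] at m1; simpa using m1
    intro ε
    fin_cases ε
    · exact hF0
    · exact hF1
  have hfin := sym_indep hq ht (S.filter (fun i => i.2.2.1 = i0.2.2.1)) g
    (fun i => (i.2.2.2.1, i.2.2.2.2)) (by
      rintro ⟨a, a', ε, b, b'⟩ hi ⟨c, c', ε', d, d'⟩ hj hij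
      rw [Finset.mem_coe, Finset.mem_filter, Finset.mem_filter] at hi hj
      simp only [kk] at hi hj
      simp only [Prod.mk.injEq] at hij
      obtain ⟨⟨_, h1, h2⟩, h3⟩ := hi
      obtain ⟨⟨_, h1', h2'⟩, h3'⟩ := hj
      have e1 : ε = ε' := h3.trans h3'.symm
      subst e1
      have e2 : a' = c' := h2.trans h2'.symm
      subst e2
      have e3 : a = c := by omega
      rw [e3, hij.1, hij.2])
    (fun C D hCD => hsplit C D hCD _)
  exact hg0 (hfin i0 (by simp [S, hi0s, hK, hl]))


/-- The family of elements
`e(Y₁+Y₂)^{a₁}(Y₁Y₂)^{a₂}(t⁻²Y₁X₁+Y₂X₂)^{ε}(X₁+X₂)^{b₁}(X₁X₂)^{b₂}e`, with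
`ε ∈ {0,1}`, `a₁, b₁ ∈ ℕ₀` and `a₂, b₂ ∈ ℤ` (negative exponents interpreted via the
inverse generators), is a ℂ-vector-space basis of the spherical double affine Hecke
algebra `eH_{t,q}e`. -/
theorem stmt4 (q t : ℂ) (hq : q ≠ 0) (ht : t ≠ 0) (ht2 : t ^ 2 ≠ -1) :
    LinearIndependent ℂ (pbwSph q t) ∧
      Submodule.span ℂ (Set.range (pbwSph q t)) = sDAHA q t := by
  exact ⟨indep_main q t hq ht ht2, span_main q t hq ht ht2⟩
end
end

section
/- The elements 𝑃₁ = e(X₁+X₂)e, 𝑃₂ = e(X₁X₂)e, 𝑄₁ = e(Y₁+Y₂)e, 𝑄₂ = e(Y₁Y₂)e and 𝑅 = e(t⁻²Y₁X₁+Y₂X₂)e of eH_{t,q}e, together with 𝑃₂⁻¹ = e(X₁X₂)⁻¹e and 𝑄₂⁻¹ = e(Y₁Y₂)⁻¹e, satisfy all the defining relations of 𝒜; consequently there is a ℂ-algebra homomorphism Φ: 𝒜 → eH_{t,q}e sending P₁, P₂, Q₁, Q₂, R to 𝑃₁, 𝑃₂, 𝑄₁, 𝑄₂, 𝑅 respectively.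 -/
noncomputable section

variable (q t : ℂ)

/-- Generators of the algebra `𝒜`: `P₁, P₂, P₂⁻¹, Q₁, Q₂, Q₂⁻¹, R`. -/
inductive AGen : Type
  | P1 | P2 | P2i | Q1 | Q2 | Q2i | R

abbrev FA : Type := FreeAlgebra ℂ AGen

def gA : AGen → FA := FreeAlgebra.ι ℂ

/-- The defining relations of the algebra `𝒜`. -/
inductive ARel (q t : ℂ) : FA → FA → Prop
  | P2P2i : ARel q t (gA .P2 * gA .P2i) 1
  | P2iP2 : ARel q t (gA .P2i * gA .P2) 1
  | Q2Q2i : ARel q t (gA .Q2 * gA .Q2i) 1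
  | Q2iQ2 : ARel q t (gA .Q2i * gA .Q2) 1
  | P2P1 : ARel q t (gA .P2 * gA .P1) (gA .P1 * gA .P2)
  | Q2Q1 : ARel q t (gA .Q2 * gA .Q1) (gA .Q1 * gA .Q2)
  | P2Q2 : ARel q t (gA .P2 * gA .Q2) ((q⁻¹ ^ 4) • (gA .Q2 * gA .P2))
  | P2Q1 : ARel q t (gA .P2 * gA .Q1) ((q⁻¹ ^ 2) • (gA .Q1 * gA .P2))
  | P1Q2 : ARel q t (gA .P1 * gA .Q2) ((q⁻¹ ^ 2) • (gA .Q2 * gA .P1))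
  | P1Q1 : ARel q t (gA .P1 * gA .Q1)
      (gA .Q1 * gA .P1 + (q⁻¹ ^ 2 - 1) • gA .R)
  | P2R : ARel q t (gA .P2 * gA .R) ((q⁻¹ ^ 2) • (gA .R * gA .P2))
  | RQ2 : ARel q t (gA .R * gA .Q2) ((q⁻¹ ^ 2) • (gA .Q2 * gA .R))
  | P1R : ARel q t (gA .P1 * gA .R)
      ((q⁻¹ ^ 2) • (gA .R * gA .P1) + (1 - q⁻¹ ^ 2) • (gA .Q1 * gA .P2))
  | RQ1 : ARel q t (gA .R * gA .Q1)
      ((q⁻¹ ^ 2) • (gA .Q1 * gA .R) + (1 - q⁻¹ ^ 2) • (gA .Q2 * gA .P1))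
  | RR : ARel q t (gA .R * gA .R)
      (((1 + t ^ 2) * (q⁻¹ ^ 2 + t⁻¹ ^ 2)) • (gA .Q2 * gA .P2)
        - (q⁻¹ ^ 2) • (gA .Q2 * gA .P1 * gA .P1)
        - (q⁻¹ ^ 2) • (gA .Q1 * gA .Q1 * gA .P2)
        + (q⁻¹ ^ 2) • (gA .Q1 * gA .R * gA .P1))

/-- The algebra `𝒜`. -/
abbrev AlgA (q t : ℂ) : Type := RingQuot (ARel q t)

variable (q t : ℂ)

def P1 : AlgA q t := RingQuot.mkAlgHom ℂ (ARel q t) (gA .P1)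
def P2 : AlgA q t := RingQuot.mkAlgHom ℂ (ARel q t) (gA .P2)
def P2i : AlgA q t := RingQuot.mkAlgHom ℂ (ARel q t) (gA .P2i)
def Q1 : AlgA q t := RingQuot.mkAlgHom ℂ (ARel q t) (gA .Q1)
def Q2 : AlgA q t := RingQuot.mkAlgHom ℂ (ARel q t) (gA .Q2)
def Q2i : AlgA q t := RingQuot.mkAlgHom ℂ (ARel q t) (gA .Q2i)
def R : AlgA q t := RingQuot.mkAlgHom ℂ (ARel q t) (gA .R)

def sP1 (q t : ℂ) : DAHA q t := eSym q t * (X1 q t + X2 q t) * eSym q t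
def sP2 (q t : ℂ) : DAHA q t := eSym q t * (X1 q t * X2 q t) * eSym q t
def sP2i (q t : ℂ) : DAHA q t := eSym q t * (X1i q t * X2i q t) * eSym q t
def sQ1 (q t : ℂ) : DAHA q t := eSym q t * (Y1 q t + Y2 q t) * eSym q t
def sQ2 (q t : ℂ) : DAHA q t := eSym q t * (Y1 q t * Y2 q t) * eSym q t
def sQ2i (q t : ℂ) : DAHA q t := eSym q t * (Y1i q t * Y2i q t) * eSym q t
def sR (q t : ℂ) : DAHA q t :=
  eSym q t * ((t⁻¹ ^ 2) • (Y1 q t * X1 q t) + Y2 q t * X2 q t) * eSym q t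


section core
set_option maxHeartbeats 4000000
set_option linter.unusedSimpArgs false
set_option linter.unusedVariables false
set_option linter.unnecessarySeqFocus false
set_option linter.unusedSectionVars false

structure Rels {A : Type*} [Ring A] [Algebra ℂ A] (q t : ℂ) (T X1 X2 Y1 Y2 e : A) : Prop where
  TT : T * T = 1 + (t - t⁻¹) • T
  TX1 : T * X1 = X2 * T - (t - t⁻¹) • X2
  TX2 : T * X2 = X1 * T + (t - t⁻¹) • X2
  TY1 : T * Y1 = Y2 * T + (t - t⁻¹) • Y1
  TY2 : T * Y2 = Y1 * T - (t - t⁻¹) • Y1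
  XX : X2 * X1 = X1 * X2
  YY : Y2 * Y1 = Y1 * Y2
  X1Y2 : X1 * Y2 = Y2 * (T * (T * X1))
  X2Y2 : X2 * Y2 = (q⁻¹ ^ 2) • (Y2 * (X2 * (1 - (t - t⁻¹) • T + (t - t⁻¹)^2 • 1)))
  X1Y1 : X1 * Y1 = (q⁻¹ ^ 2) • (((1 + (t - t⁻¹)^2) • Y1 - (t - t⁻¹) • (T * Y1)) * X1)
  X2Y1 : X2 * Y1 = T * (X1 * (T * Y1))
  Te : T * e = t • e

variable {A : Type*} [Ring A] [Algebra ℂ A] {q t : ℂ} {T X1 X2 Y1 Y2 e : A}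

theorem assoc' {a b c : A} (h : a * b = c) (z : A) : a * (b * z) = c * z := by
  rw [← mul_assoc, h]

theorem Rels.rTP1 (h : Rels q t T X1 X2 Y1 Y2 e) (hq : q ≠ 0) (ht : t ≠ 0) :
    (T * ((X1 + X2) * e))
    = t • ((X1 + X2) * e) := by
  simp only [mul_assoc, add_mul, sub_mul, mul_add, mul_sub, smul_mul_assoc, mul_smul_comm, one_mul, mul_one,
    h.TT, h.TX1, h.TX2, h.TY1, h.TY2, h.Te, h.XX, h.YY, h.X1Y2, h.X2Y2, h.X1Y1, h.X2Y1,
    assoc' h.TT, assoc' h.TX1, assoc' h.TX2, assoc' h.TY1, assoc' h.TY2, assoc' h.XX, assoc' h.YY,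
    assoc' h.X1Y2, assoc' h.X2Y2, assoc' h.X1Y1, assoc' h.X2Y1]
  match_scalars <;> field_simp <;> ring

theorem Rels.rTP2 (h : Rels q t T X1 X2 Y1 Y2 e) (hq : q ≠ 0) (ht : t ≠ 0) :
    (T * ((X1 * X2) * e))
    = t • ((X1 * X2) * e) := by
  simp only [mul_assoc, add_mul, sub_mul, mul_add, mul_sub, smul_mul_assoc, mul_smul_comm, one_mul, mul_one,
    h.TT, h.TX1, h.TX2, h.TY1, h.TY2, h.Te, h.XX, h.YY, h.X1Y2, h.X2Y2, h.X1Y1, h.X2Y1,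
    assoc' h.TT, assoc' h.TX1, assoc' h.TX2, assoc' h.TY1, assoc' h.TY2, assoc' h.XX, assoc' h.YY,
    assoc' h.X1Y2, assoc' h.X2Y2, assoc' h.X1Y1, assoc' h.X2Y1]
  match_scalars <;> field_simp <;> ring

theorem Rels.rTQ1 (h : Rels q t T X1 X2 Y1 Y2 e) (hq : q ≠ 0) (ht : t ≠ 0) :
    (T * ((Y1 + Y2) * e))
    = t • ((Y1 + Y2) * e) := by
  simp only [mul_assoc, add_mul, sub_mul, mul_add, mul_sub, smul_mul_assoc, mul_smul_comm, one_mul, mul_one,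
    h.TT, h.TX1, h.TX2, h.TY1, h.TY2, h.Te, h.XX, h.YY, h.X1Y2, h.X2Y2, h.X1Y1, h.X2Y1,
    assoc' h.TT, assoc' h.TX1, assoc' h.TX2, assoc' h.TY1, assoc' h.TY2, assoc' h.XX, assoc' h.YY,
    assoc' h.X1Y2, assoc' h.X2Y2, assoc' h.X1Y1, assoc' h.X2Y1]
  match_scalars <;> field_simp <;> ring

theorem Rels.rTQ2 (h : Rels q t T X1 X2 Y1 Y2 e) (hq : q ≠ 0) (ht : t ≠ 0) :
    (T * ((Y1 * Y2) * e))
    = t • ((Y1 * Y2) * e) := by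
  simp only [mul_assoc, add_mul, sub_mul, mul_add, mul_sub, smul_mul_assoc, mul_smul_comm, one_mul, mul_one,
    h.TT, h.TX1, h.TX2, h.TY1, h.TY2, h.Te, h.XX, h.YY, h.X1Y2, h.X2Y2, h.X1Y1, h.X2Y1,
    assoc' h.TT, assoc' h.TX1, assoc' h.TX2, assoc' h.TY1, assoc' h.TY2, assoc' h.XX, assoc' h.YY,
    assoc' h.X1Y2, assoc' h.X2Y2, assoc' h.X1Y1, assoc' h.X2Y1]
  match_scalars <;> field_simp <;> ring

theorem Rels.rTR (h : Rels q t T X1 X2 Y1 Y2 e) (hq : q ≠ 0) (ht : t ≠ 0) :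
    (T * ((Y1 * X1 + (t⁻¹ ^ 2) • (Y2 * X2)) * e))
    = t • ((Y1 * X1 + (t⁻¹ ^ 2) • (Y2 * X2)) * e) := by
  simp only [mul_assoc, add_mul, sub_mul, mul_add, mul_sub, smul_mul_assoc, mul_smul_comm, one_mul, mul_one,
    h.TT, h.TX1, h.TX2, h.TY1, h.TY2, h.Te, h.XX, h.YY, h.X1Y2, h.X2Y2, h.X1Y1, h.X2Y1,
    assoc' h.TT, assoc' h.TX1, assoc' h.TX2, assoc' h.TY1, assoc' h.TY2, assoc' h.XX, assoc' h.YY,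
    assoc' h.X1Y2, assoc' h.X2Y2, assoc' h.X1Y1, assoc' h.X2Y1]
  match_scalars <;> field_simp <;> ring

theorem Rels.rP2P1 (h : Rels q t T X1 X2 Y1 Y2 e) :
    ((X1 * X2) * ((X1 + X2) * e))
    = ((X1 + X2) * ((X1 * X2) * e)) := by
  rw [← mul_assoc, ← mul_assoc]; congr 1
  simp only [mul_add, add_mul, mul_assoc, h.XX, assoc' h.XX]

theorem Rels.rQ2Q1 (h : Rels q t T X1 X2 Y1 Y2 e) :
    ((Y1 * Y2) * ((Y1 + Y2) * e))
    = ((Y1 + Y2) * ((Y1 * Y2) * e)) := by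
  rw [← mul_assoc, ← mul_assoc]; congr 1
  simp only [mul_add, add_mul, mul_assoc, h.YY, assoc' h.YY]

theorem Rels.rP1Q1 (h : Rels q t T X1 X2 Y1 Y2 e) (hq : q ≠ 0) (ht : t ≠ 0) :
    ((X1 + X2) * ((Y1 + Y2) * e))
    = ((Y1 + Y2) * ((X1 + X2) * e)) + (q⁻¹ ^ 2 - 1) • ((Y1 * X1 + (t⁻¹ ^ 2) • (Y2 * X2)) * e) := by
  simp only [mul_assoc, add_mul, sub_mul, mul_add, mul_sub, smul_mul_assoc, mul_smul_comm, one_mul, mul_one,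
    h.TT, h.TX1, h.TX2, h.TY1, h.TY2, h.Te, h.XX, h.YY, h.X1Y2, h.X2Y2, h.X1Y1, h.X2Y1,
    assoc' h.TT, assoc' h.TX1, assoc' h.TX2, assoc' h.TY1, assoc' h.TY2, assoc' h.XX, assoc' h.YY,
    assoc' h.X1Y2, assoc' h.X2Y2, assoc' h.X1Y1, assoc' h.X2Y1]
  match_scalars <;> field_simp <;> ring

theorem Rels.rP1R (h : Rels q t T X1 X2 Y1 Y2 e) (hq : q ≠ 0) (ht : t ≠ 0) :
    ((X1 + X2) * ((Y1 * X1 + (t⁻¹ ^ 2) • (Y2 * X2)) * e))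
    = (q⁻¹ ^ 2) • ((Y1 * X1 + (t⁻¹ ^ 2) • (Y2 * X2)) * ((X1 + X2) * e)) + (1 - q⁻¹ ^ 2) • ((Y1 + Y2) * ((X1 * X2) * e)) := by
  simp only [mul_assoc, add_mul, sub_mul, mul_add, mul_sub, smul_mul_assoc, mul_smul_comm, one_mul, mul_one,
    h.TT, h.TX1, h.TX2, h.TY1, h.TY2, h.Te, h.XX, h.YY, h.X1Y2, h.X2Y2, h.X1Y1, h.X2Y1,
    assoc' h.TT, assoc' h.TX1, assoc' h.TX2, assoc' h.TY1, assoc' h.TY2, assoc' h.XX, assoc' h.YY,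
    assoc' h.X1Y2, assoc' h.X2Y2, assoc' h.X1Y1, assoc' h.X2Y1]
  match_scalars <;> field_simp <;> ring

theorem Rels.rRQ1 (h : Rels q t T X1 X2 Y1 Y2 e) (hq : q ≠ 0) (ht : t ≠ 0) :
    ((Y1 * X1 + (t⁻¹ ^ 2) • (Y2 * X2)) * ((Y1 + Y2) * e))
    = (q⁻¹ ^ 2) • ((Y1 + Y2) * ((Y1 * X1 + (t⁻¹ ^ 2) • (Y2 * X2)) * e)) + (1 - q⁻¹ ^ 2) • ((Y1 * Y2) * ((X1 + X2) * e)) := by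
  simp only [mul_assoc, add_mul, sub_mul, mul_add, mul_sub, smul_mul_assoc, mul_smul_comm, one_mul, mul_one,
    h.TT, h.TX1, h.TX2, h.TY1, h.TY2, h.Te, h.XX, h.YY, h.X1Y2, h.X2Y2, h.X1Y1, h.X2Y1,
    assoc' h.TT, assoc' h.TX1, assoc' h.TX2, assoc' h.TY1, assoc' h.TY2, assoc' h.XX, assoc' h.YY,
    assoc' h.X1Y2, assoc' h.X2Y2, assoc' h.X1Y1, assoc' h.X2Y1]
  match_scalars <;> field_simp <;> ring

theorem Rels.rRR (h : Rels q t T X1 X2 Y1 Y2 e) (hq : q ≠ 0) (ht : t ≠ 0) :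
    ((Y1 * X1 + (t⁻¹ ^ 2) • (Y2 * X2)) * ((Y1 * X1 + (t⁻¹ ^ 2) • (Y2 * X2)) * e))
    = ((1 + t ^ 2) * (q⁻¹ ^ 2 + t⁻¹ ^ 2)) • ((Y1 * Y2) * ((X1 * X2) * e))
    - (q⁻¹ ^ 2) • ((Y1 * Y2) * ((X1 + X2) * ((X1 + X2) * e)))
    - (q⁻¹ ^ 2) • ((Y1 + Y2) * ((Y1 + Y2) * ((X1 * X2) * e)))
    + (q⁻¹ ^ 2) • ((Y1 + Y2) * ((Y1 * X1 + (t⁻¹ ^ 2) • (Y2 * X2)) * ((X1 + X2) * e))) := by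
  simp only [mul_assoc, add_mul, sub_mul, mul_add, mul_sub, smul_mul_assoc, mul_smul_comm, one_mul, mul_one,
    h.TT, h.TX1, h.TX2, h.TY1, h.TY2, h.Te, h.XX, h.YY, h.X1Y2, h.X2Y2, h.X1Y1, h.X2Y1,
    assoc' h.TT, assoc' h.TX1, assoc' h.TX2, assoc' h.TY1, assoc' h.TY2, assoc' h.XX, assoc' h.YY,
    assoc' h.X1Y2, assoc' h.X2Y2, assoc' h.X1Y1, assoc' h.X2Y1]
  match_scalars <;> field_simp <;> ring

structure Base {A : Type*} [Ring A] [Algebra ℂ A] (q t : ℂ)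
    (T Ti X1 X1i X2 X2i Y1 Y1i Y2 Y2i e : A) : Prop where
  TTi : T * Ti = 1
  TiT : Ti * T = 1
  X1X1i : X1 * X1i = 1
  X1iX1 : X1i * X1 = 1
  X2X2i : X2 * X2i = 1
  X2iX2 : X2i * X2 = 1
  Y1Y1i : Y1 * Y1i = 1
  Y1iY1 : Y1i * Y1 = 1
  Y2Y2i : Y2 * Y2i = 1
  Y2iY2 : Y2i * Y2 = 1
  TX1T : T * X1 * T = X2
  TiY1Ti : Ti * Y1 * Ti = Y2
  Xcomm : X1 * X2 = X2 * X1
  Ycomm : Y1 * Y2 = Y2 * Y1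
  YXX : Y1 * (X1 * X2) = (q ^ 2) • (X1 * X2 * Y1)
  X1iY2 : X1i * Y2 = Y2 * X1i * Ti * Ti
  hecke : (T + algebraMap ℂ A t⁻¹) * (T - algebraMap ℂ A t) = 0
  he : e = ((1 + t ^ 2)⁻¹ : ℂ) • (1 + t • T)

variable {Ti X1i X2i Y1i Y2i : A}

theorem Base.TT (h : Base q t T Ti X1 X1i X2 X2i Y1 Y1i Y2 Y2i e) (ht : t ≠ 0) :
    T * T = 1 + (t - t⁻¹) • T := by
  have := h.hecke
  simp only [Algebra.algebraMap_eq_smul_one, add_mul, mul_sub, smul_mul_assoc, mul_smul_comm,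
    one_mul, mul_one, smul_smul, inv_mul_cancel₀ ht, one_smul] at this
  rw [← sub_eq_zero, ← this, smul_add, smul_smul, mul_inv_cancel₀ ht]
  module

theorem Base.Ti_eq (h : Base q t T Ti X1 X1i X2 X2i Y1 Y1i Y2 Y2i e) (ht : t ≠ 0) :
    Ti = T - (t - t⁻¹) • 1 := by
  have h1 : T * (T - (t - t⁻¹) • 1) = 1 := by
    rw [mul_sub, h.TT ht, mul_smul_comm, mul_one]; abel
  calc Ti = Ti * (T * (T - (t - t⁻¹) • 1)) := by rw [h1, mul_one]
    _ = _ := by rw [← mul_assoc, h.TiT, one_mul]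

theorem Base.TiTi (h : Base q t T Ti X1 X1i X2 X2i Y1 Y1i Y2 Y2i e) (ht : t ≠ 0) :
    Ti * Ti = 1 - (t - t⁻¹) • T + (t - t⁻¹)^2 • 1 := by
  rw [h.Ti_eq ht]
  simp only [sub_mul, mul_sub, h.TT ht, smul_mul_assoc, mul_smul_comm, mul_one, one_mul]
  module

theorem Base.TX1' (h : Base q t T Ti X1 X1i X2 X2i Y1 Y1i Y2 Y2i e) : T * X1 = X2 * Ti := by
  rw [← h.TX1T, mul_assoc, h.TTi, mul_one]

theorem Base.TiX2' (h : Base q t T Ti X1 X1i X2 X2i Y1 Y1i Y2 Y2i e) : Ti * X2 = X1 * T := by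
  rw [← h.TX1T, ← mul_assoc, ← mul_assoc, h.TiT, one_mul]

theorem Base.TY2' (h : Base q t T Ti X1 X1i X2 X2i Y1 Y1i Y2 Y2i e) : T * Y2 = Y1 * Ti := by
  rw [← h.TiY1Ti, ← mul_assoc, ← mul_assoc, h.TTi, one_mul]

theorem Base.TiY1' (h : Base q t T Ti X1 X1i X2 X2i Y1 Y1i Y2 Y2i e) : Ti * Y1 = Y2 * T := by
  rw [← h.TiY1Ti, mul_assoc, h.TiT, mul_one]

theorem Base.TiP2 (h : Base q t T Ti X1 X1i X2 X2i Y1 Y1i Y2 Y2i e) :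
    Ti * (X1 * X2) = X1 * X2 * Ti := by
  rw [h.Xcomm, ← mul_assoc, h.TiX2', mul_assoc, h.TX1', ← mul_assoc, h.Xcomm]

theorem Base.TiQ2 (h : Base q t T Ti X1 X1i X2 X2i Y1 Y1i Y2 Y2i e) :
    Ti * (Y1 * Y2) = Y1 * Y2 * Ti := by
  rw [← mul_assoc, h.TiY1', mul_assoc, h.TY2', ← mul_assoc, ← h.Ycomm]

theorem Base.TP2 (h : Base q t T Ti X1 X1i X2 X2i Y1 Y1i Y2 Y2i e) :
    T * (X1 * X2) = X1 * X2 * T := by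
  calc T * (X1 * X2) = T * ((X1 * X2) * (Ti * T)) := by rw [h.TiT, mul_one]
    _ = T * (X1 * X2 * Ti) * T := by simp only [mul_assoc]
    _ = _ := by rw [← h.TiP2, ← mul_assoc, h.TTi, one_mul]

theorem Base.TQ2 (h : Base q t T Ti X1 X1i X2 X2i Y1 Y1i Y2 Y2i e) :
    T * (Y1 * Y2) = Y1 * Y2 * T := by
  calc T * (Y1 * Y2) = T * ((Y1 * Y2) * (Ti * T)) := by rw [h.TiT, mul_one]
    _ = T * (Y1 * Y2 * Ti) * T := by simp only [mul_assoc]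
    _ = _ := by rw [← h.TiQ2, ← mul_assoc, h.TTi, one_mul]

theorem Base.X1Y2 (h : Base q t T Ti X1 X1i X2 X2i Y1 Y1i Y2 Y2i e) :
    X1 * Y2 = Y2 * (T * (T * X1)) := by
  have h1 : X1i * Y2 * (T * (T * X1)) = Y2 := by
    rw [h.X1iY2]
    simp only [mul_assoc, assoc' h.TiT, one_mul, h.X1iX1, mul_one]
  calc X1 * Y2 = X1 * (X1i * Y2 * (T * (T * X1))) := by rw [h1]
    _ = _ := by simp only [mul_assoc, assoc' h.X1X1i, one_mul]

theorem Base.P2Y1 (h : Base q t T Ti X1 X1i X2 X2i Y1 Y1i Y2 Y2i e) (hq : q ≠ 0) :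
    X1 * X2 * Y1 = (q⁻¹ ^ 2) • (Y1 * (X1 * X2)) := by
  rw [h.YXX, smul_smul, ← mul_pow, inv_mul_cancel₀ hq, one_pow, one_smul]

theorem Base.P2Y2 (h : Base q t T Ti X1 X1i X2 X2i Y1 Y1i Y2 Y2i e) (hq : q ≠ 0) :
    X1 * X2 * Y2 = (q⁻¹ ^ 2) • (Y2 * (X1 * X2)) := by
  rw [← h.TiY1Ti, ← mul_assoc, ← mul_assoc, ← h.TiP2, mul_assoc Ti, h.P2Y1 hq, mul_smul_comm,
    smul_mul_assoc, mul_assoc, mul_assoc, ← h.TiP2]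
  simp only [mul_assoc]

theorem Base.X2Y2 (h : Base q t T Ti X1 X1i X2 X2i Y1 Y1i Y2 Y2i e) (hq : q ≠ 0) :
    X2 * Y2 = (q⁻¹ ^ 2) • (Y2 * (X2 * (Ti * Ti))) := by
  calc X2 * Y2 = X1i * (X1 * X2 * Y2) := by simp only [mul_assoc, assoc' h.X1iX1, one_mul]
    _ = (q⁻¹ ^ 2) • (X1i * Y2 * (X1 * X2)) := by
      rw [h.P2Y2 hq, mul_smul_comm, mul_assoc]
    _ = (q⁻¹ ^ 2) • (Y2 * X1i * (X1 * X2) * Ti * Ti) := by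
      rw [h.X1iY2, mul_assoc _ Ti, h.TiP2, ← mul_assoc, mul_assoc _ Ti, h.TiP2]
      simp only [mul_assoc]
    _ = _ := by simp only [mul_assoc, assoc' h.X1iX1, one_mul]

theorem Base.X1Y1 (h : Base q t T Ti X1 X1i X2 X2i Y1 Y1i Y2 Y2i e) (hq : q ≠ 0) :
    X1 * Y1 = (q⁻¹ ^ 2) • (Ti * Ti * Y1 * X1) := by
  have hX : X1 = Ti * X2 * Ti := by rw [h.TiX2', mul_assoc, h.TTi, mul_one]
  have hY : Y1 = T * Y2 * T := by rw [h.TY2', mul_assoc, h.TiT, mul_one]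
  calc X1 * Y1 = Ti * X2 * Ti * (T * Y2 * T) := by rw [← hX, ← hY]
    _ = Ti * (X2 * Y2) * T := by simp only [mul_assoc, assoc' h.TiT, one_mul]
    _ = (q⁻¹ ^ 2) • (Ti * Y2 * (X2 * Ti)) := by
      rw [h.X2Y2 hq, mul_smul_comm, smul_mul_assoc]
      simp only [mul_assoc, h.TiT, mul_one]
    _ = _ := by
      rw [← h.TX1', ← mul_assoc, mul_assoc Ti, ← h.TiY1', ← mul_assoc]

theorem Base.X1Q2 (h : Base q t T Ti X1 X1i X2 X2i Y1 Y1i Y2 Y2i e) (hq : q ≠ 0) :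
    X1 * (Y1 * Y2) = (q⁻¹ ^ 2) • (Y1 * Y2 * X1) := by
  calc X1 * (Y1 * Y2) = Y2 * (T * (T * X1)) * Y1 := by rw [h.Ycomm, ← mul_assoc, h.X1Y2]
    _ = Y2 * (T * (T * (X1 * Y1))) := by simp only [mul_assoc]
    _ = (q⁻¹ ^ 2) • (Y2 * Y1 * X1) := by
      rw [h.X1Y1 hq]
      simp only [mul_smul_comm, mul_assoc, assoc' h.TTi, one_mul]
    _ = _ := by rw [h.Ycomm]

theorem Base.X2Q2 (h : Base q t T Ti X1 X1i X2 X2i Y1 Y1i Y2 Y2i e) (hq : q ≠ 0) :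
    X2 * (Y1 * Y2) = (q⁻¹ ^ 2) • (Y1 * Y2 * X2) := by
  rw [← h.TX1T, mul_assoc _ T, h.TQ2, ← mul_assoc, mul_assoc T, h.X1Q2 hq, mul_smul_comm,
    smul_mul_assoc, ← mul_assoc, h.TQ2]
  simp only [mul_assoc]

theorem Base.Te (h : Base q t T Ti X1 X1i X2 X2i Y1 Y1i Y2 Y2i e) (ht : t ≠ 0) :
    T * e = t • e := by
  rw [h.he]
  simp only [mul_smul_comm, mul_add, mul_one, h.TT ht]
  match_scalars <;> field_simp <;> ring

theorem Base.rels (h : Base q t T Ti X1 X1i X2 X2i Y1 Y1i Y2 Y2i e) (hq : q ≠ 0) (ht : t ≠ 0) :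
    Rels q t T X1 X2 Y1 Y2 e where
  TT := h.TT ht
  TX1 := by rw [h.TX1', h.Ti_eq ht, mul_sub, mul_smul_comm, mul_one]
  TX2 := by
    rw [← h.TiX2', h.Ti_eq ht, sub_mul, smul_mul_assoc, one_mul]; abel
  TY1 := by
    rw [← h.TiY1', h.Ti_eq ht, sub_mul, smul_mul_assoc, one_mul]; abel
  TY2 := by rw [h.TY2', h.Ti_eq ht, mul_sub, mul_smul_comm, mul_one]
  XX := h.Xcomm.symm
  YY := h.Ycomm.symm
  X1Y2 := h.X1Y2
  X2Y2 := by rw [h.X2Y2 hq, h.TiTi ht]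
  X1Y1 := by
    rw [h.X1Y1 hq, h.TiTi ht]
    congr 2
    simp only [add_mul, sub_mul, one_mul, smul_mul_assoc]
    module
  X2Y1 := by rw [← h.TX1T]; simp only [mul_assoc]
  Te := h.Te ht

theorem Base.rP2Q2 (h : Base q t T Ti X1 X1i X2 X2i Y1 Y1i Y2 Y2i e) (hq : q ≠ 0) :
    ((X1 * X2) * ((Y1 * Y2) * e))
    = (q⁻¹ ^ 4) • ((Y1 * Y2) * ((X1 * X2) * e)) := by
  have y1 := assoc' (h.P2Y1 hq)
  have y2 := assoc' (h.P2Y2 hq)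
  rw [mul_assoc Y1, y1, smul_mul_assoc, mul_assoc, y2, smul_mul_assoc, mul_smul_comm, smul_smul]
  congr 1
  · ring
  · simp only [mul_assoc]

theorem Base.rP2Q1 (h : Base q t T Ti X1 X1i X2 X2i Y1 Y1i Y2 Y2i e) (hq : q ≠ 0) :
    ((X1 * X2) * ((Y1 + Y2) * e))
    = (q⁻¹ ^ 2) • ((Y1 + Y2) * ((X1 * X2) * e)) := by
  have y1 := assoc' (h.P2Y1 hq)
  have y2 := assoc' (h.P2Y2 hq)
  rw [add_mul, mul_add, y1, y2, add_mul, smul_add]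
  simp only [smul_mul_assoc, mul_assoc]

theorem Base.rP1Q2 (h : Base q t T Ti X1 X1i X2 X2i Y1 Y1i Y2 Y2i e) (hq : q ≠ 0) :
    ((X1 + X2) * ((Y1 * Y2) * e))
    = (q⁻¹ ^ 2) • ((Y1 * Y2) * ((X1 + X2) * e)) := by
  have y1 := assoc' (h.X1Q2 hq)
  have y2 := assoc' (h.X2Q2 hq)
  rw [add_mul, add_mul, y1, y2, mul_add, smul_add]
  simp only [smul_mul_assoc, mul_assoc]

theorem Base.rP2R (h : Base q t T Ti X1 X1i X2 X2i Y1 Y1i Y2 Y2i e) (hq : q ≠ 0) :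
    ((X1 * X2) * ((Y1 * X1 + (t⁻¹ ^ 2) • (Y2 * X2)) * e))
    = (q⁻¹ ^ 2) • ((Y1 * X1 + (t⁻¹ ^ 2) • (Y2 * X2)) * ((X1 * X2) * e)) := by
  have y1 := assoc' (h.P2Y1 hq)
  have y2 := assoc' (h.P2Y2 hq)
  have c1 : X1 * X2 * X1 = X1 * (X1 * X2) := by rw [mul_assoc, ← h.Xcomm]
  have c2 : X1 * X2 * X2 = X2 * (X1 * X2) := by rw [h.Xcomm, mul_assoc]; rw [← h.Xcomm]
  simp only [add_mul, mul_add, smul_mul_assoc, mul_smul_comm, smul_add, mul_assoc Y1, mul_assoc Y2,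
    y1, y2]
  rw [assoc' c1, assoc' c2, smul_comm (q⁻¹ ^ 2) (t⁻¹ ^ 2)]
  simp only [mul_assoc]

theorem Base.rRQ2 (h : Base q t T Ti X1 X1i X2 X2i Y1 Y1i Y2 Y2i e) (hq : q ≠ 0) :
    ((Y1 * X1 + (t⁻¹ ^ 2) • (Y2 * X2)) * ((Y1 * Y2) * e))
    = (q⁻¹ ^ 2) • ((Y1 * Y2) * ((Y1 * X1 + (t⁻¹ ^ 2) • (Y2 * X2)) * e)) := by
  have y1 := assoc' (h.X1Q2 hq)
  have y2 := assoc' (h.X2Q2 hq)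
  have c1 : Y1 * Y2 * Y1 = Y1 * (Y1 * Y2) := by rw [mul_assoc, ← h.Ycomm]
  have c2 : Y1 * Y2 * Y2 = Y2 * (Y1 * Y2) := by rw [h.Ycomm, mul_assoc]; rw [← h.Ycomm]
  simp only [add_mul, mul_add, smul_mul_assoc, mul_smul_comm, smul_add, mul_assoc Y1 X1, mul_assoc Y2 X2,
    y1, y2]
  rw [assoc' c1, assoc' c2, smul_comm (q⁻¹ ^ 2) (t⁻¹ ^ 2)]
  simp only [mul_assoc]


/-- elements on which `e` acts trivially from the left -/
theorem Base.sym (h : Base q t T Ti X1 X1i X2 X2i Y1 Y1i Y2 Y2i e) (ht2 : t ^ 2 ≠ -1) {x : A}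
    (hx : T * (x * e) = t • (x * e)) : e * (x * e) = x * e := by
  have h2 : 1 + t ^ 2 ≠ 0 := fun hh => ht2 (by linear_combination hh)
  conv_lhs => rw [h.he]
  simp only [smul_mul_assoc, add_mul, one_mul] 
  rw [← h.he, hx]
  match_scalars
  field_simp

theorem Base.ee (h : Base q t T Ti X1 X1i X2 X2i Y1 Y1i Y2 Y2i e) (ht : t ≠ 0) (ht2 : t ^ 2 ≠ -1) :
    e * e = e := by
  have := h.sym ht2 (x := 1) (by simpa using h.Te ht)
  simpa using this

theorem Base.eR (h : Base q t T Ti X1 X1i X2 X2i Y1 Y1i Y2 Y2i e) (hq : q ≠ 0) (ht : t ≠ 0)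
    (ht2 : t ^ 2 ≠ -1) :
    e * (((t⁻¹ ^ 2) • (Y1 * X1) + Y2 * X2) * e) = (Y1 * X1 + (t⁻¹ ^ 2) • (Y2 * X2)) * e := by
  have h2 : 1 + t ^ 2 ≠ 0 := fun hh => ht2 (by linear_combination hh)
  have r := h.rels hq ht
  conv_lhs => rw [h.he]
  simp only [smul_mul_assoc, add_mul, one_mul] 
  rw [← h.he]
  simp only [mul_assoc, add_mul, sub_mul, mul_add, mul_sub, smul_mul_assoc, mul_smul_comm,
    assoc' r.TX1, assoc' r.TX2, assoc' r.TY1, assoc' r.TY2, r.Te]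
  match_scalars <;> field_simp <;> ring

theorem Base.all (h : Base q t T Ti X1 X1i X2 X2i Y1 Y1i Y2 Y2i e) (hq : q ≠ 0) (ht : t ≠ 0)
    (ht2 : t ^ 2 ≠ -1) (p1 p2 p2i q1 q2 q2i r : A)
    (hp1 : p1 = e * (X1 + X2) * e) (hp2 : p2 = e * (X1 * X2) * e)
    (hp2i : p2i = e * (X1i * X2i) * e)
    (hq1 : q1 = e * (Y1 + Y2) * e) (hq2 : q2 = e * (Y1 * Y2) * e)
    (hq2i : q2i = e * (Y1i * Y2i) * e)
    (hr : r = e * ((t⁻¹ ^ 2) • (Y1 * X1) + Y2 * X2) * e) :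
    (p2 * p2i = e ∧ p2i * p2 = e ∧ q2 * q2i = e ∧ q2i * q2 = e ∧
     p2 * p1 = p1 * p2 ∧
     q2 * q1 = q1 * q2 ∧
     p2 * q2 = (q⁻¹ ^ 4) • (q2 * p2) ∧
     p2 * q1 = (q⁻¹ ^ 2) • (q1 * p2) ∧
     p1 * q2 = (q⁻¹ ^ 2) • (q2 * p1) ∧
     p1 * q1 = q1 * p1 + (q⁻¹ ^ 2 - 1) • r ∧
     p2 * r = (q⁻¹ ^ 2) • (r * p2) ∧
     r * q2 = (q⁻¹ ^ 2) • (q2 * r) ∧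
     p1 * r = (q⁻¹ ^ 2) • (r * p1) + (1 - q⁻¹ ^ 2) • (q1 * p2) ∧
     r * q1 = (q⁻¹ ^ 2) • (q1 * r) + (1 - q⁻¹ ^ 2) • (q2 * p1) ∧
     r * r = ((1 + t ^ 2) * (q⁻¹ ^ 2 + t⁻¹ ^ 2)) • (q2 * p2)
         - (q⁻¹ ^ 2) • (q2 * p1 * p1)
         - (q⁻¹ ^ 2) • (q1 * q1 * p2)
         + (q⁻¹ ^ 2) • (q1 * r * p1)) := by
  have rl := h.rels hq ht
  have ee := h.ee ht ht2
  rw [mul_assoc] at hp1 hp2 hq1 hq2 hr hp2i hq2i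
  rw [h.sym ht2 (rl.rTP1 hq ht)] at hp1
  have sp2 := h.sym ht2 (rl.rTP2 hq ht)
  have sq2 := h.sym ht2 (rl.rTQ2 hq ht)
  rw [sp2] at hp2
  rw [h.sym ht2 (rl.rTQ1 hq ht)] at hq1
  rw [sq2] at hq2
  rw [h.eR hq ht ht2] at hr
  -- `e` commutes with the central-type elements
  have cp : e * (X1 * X2) = X1 * X2 * e := by
    rw [h.he]; simp only [smul_mul_assoc, mul_smul_comm, add_mul, mul_add, one_mul, mul_one, h.TP2]
  have cq : e * (Y1 * Y2) = Y1 * Y2 * e := by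
    rw [h.he]; simp only [smul_mul_assoc, mul_smul_comm, add_mul, mul_add, one_mul, mul_one, h.TQ2]
  have pp1 : X1i * X2i * (X1 * X2) = 1 := by
    rw [h.Xcomm]; simp only [mul_assoc, assoc' h.X2iX2, one_mul, h.X1iX1]
  have pp2 : X1 * X2 * (X1i * X2i) = 1 := by
    rw [h.Xcomm]; simp only [mul_assoc, assoc' h.X1X1i, one_mul, h.X2X2i]
  have qq1 : Y1i * Y2i * (Y1 * Y2) = 1 := by
    rw [h.Ycomm]; simp only [mul_assoc, assoc' h.Y2iY2, one_mul, h.Y1iY1]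
  have qq2 : Y1 * Y2 * (Y1i * Y2i) = 1 := by
    rw [h.Ycomm]; simp only [mul_assoc, assoc' h.Y1Y1i, one_mul, h.Y2Y2i]
  have inv1 : ∀ a b : A, e * a = a * e → a * b = 1 → a * e * (e * (b * e)) = e := by
    intro a b h1 h2
    rw [← mul_assoc (a * e) e, mul_assoc a e e, ee, ← h1, mul_assoc, ← mul_assoc a, h2, one_mul, ee]
  have inv2 : ∀ a b : A, e * a = a * e → b * a = 1 → e * (b * e) * (a * e) = e := by
    intro a b h1 h2
    rw [← h1, mul_assoc e, mul_assoc b, ← mul_assoc e e, ee, h1, ← mul_assoc b, h2, one_mul, ee]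
  -- left multiplication by e is trivial on all symmetric elements
  have ep1 : e * p1 = p1 := by rw [hp1, h.sym ht2 (rl.rTP1 hq ht)]
  have ep2 : e * p2 = p2 := by rw [hp2, sp2]
  have eq1 : e * q1 = q1 := by rw [hq1, h.sym ht2 (rl.rTQ1 hq ht)]
  have eq2 : e * q2 = q2 := by rw [hq2, sq2]
  have er : e * r = r := by rw [hr, h.sym ht2 (rl.rTR hq ht)]
  have mp1 : ∀ z, e * z = z → p1 * z = (X1 + X2) * z := by
    intro z hz; rw [hp1, mul_assoc, hz]
  have mp2 : ∀ z, e * z = z → p2 * z = (X1 * X2) * z := by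
    intro z hz; rw [hp2, mul_assoc, hz]
  have mq1 : ∀ z, e * z = z → q1 * z = (Y1 + Y2) * z := by
    intro z hz; rw [hq1, mul_assoc, hz]
  have mq2 : ∀ z, e * z = z → q2 * z = (Y1 * Y2) * z := by
    intro z hz; rw [hq2, mul_assoc, hz]
  have mr : ∀ z, e * z = z → r * z = (Y1 * X1 + (t⁻¹ ^ 2) • (Y2 * X2)) * z := by
    intro z hz; rw [hr, mul_assoc, hz]
  refine ⟨?_, ?_, ?_, ?_, ?_, ?_, ?_, ?_, ?_, ?_, ?_, ?_, ?_, ?_, ?_⟩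
  · rw [hp2, hp2i]; exact inv1 _ _ cp pp2
  · rw [hp2, hp2i]; exact inv2 _ _ cp pp1
  · rw [hq2, hq2i]; exact inv1 _ _ cq qq2
  · rw [hq2, hq2i]; exact inv2 _ _ cq qq1
  · rw [mp2 _ ep1, mp1 _ ep2, hp1, hp2, rl.rP2P1]
  · rw [mq2 _ eq1, mq1 _ eq2, hq1, hq2, rl.rQ2Q1]
  · rw [mp2 _ eq2, mq2 _ ep2, hq2, hp2, h.rP2Q2 hq]
  · rw [mp2 _ eq1, mq1 _ ep2, hq1, hp2, h.rP2Q1 hq]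
  · rw [mp1 _ eq2, mq2 _ ep1, hq2, hp1, h.rP1Q2 hq]
  · rw [mp1 _ eq1, mq1 _ ep1, hq1, hp1, hr, rl.rP1Q1 hq ht]
  · rw [mp2 _ er, mr _ ep2, hp2, hr, h.rP2R hq]
  · rw [mr _ eq2, mq2 _ er, hq2, hr, h.rRQ2 hq]
  · rw [mp1 _ er, mr _ ep1, mq1 _ ep2, hp1, hp2, hr, rl.rP1R hq ht]
  · rw [mr _ eq1, mq1 _ er, mq2 _ ep1, hq1, hp1, hr, rl.rRQ1 hq ht]
  · have e1 : e * (p1 * p1) = p1 * p1 := by rw [← mul_assoc, ep1]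
    have e2 : e * (q1 * p2) = q1 * p2 := by rw [← mul_assoc, eq1]
    have e3 : e * (r * p1) = r * p1 := by rw [← mul_assoc, er]
    rw [mul_assoc q2, mul_assoc q1, mul_assoc q1, mr _ er, mq2 _ ep2, mq2 _ e1, mp1 _ ep1,
      mq1 _ e2, mq1 _ ep2, mq1 _ e3, mr _ ep1, hp1, hp2, hr, rl.rRR hq ht]
end core

section corner

variable {A : Type*} [Ring A] [Algebra ℂ A]

def cornerHom {e : A} (he : IsIdempotentElem e) : ℂ →+* he.Corner where
  toFun c := ⟨c • e, by
    rw [Subsemigroup.mem_corner_iff he]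
    simp [he.eq]⟩
  map_one' := Subtype.ext (one_smul ℂ e)
  map_mul' a b := Subtype.ext (by
    change (a * b) • e = (a • e) * (b • e)
    rw [smul_mul_smul_comm, he.eq])
  map_zero' := Subtype.ext (zero_smul ℂ e)
  map_add' a b := Subtype.ext (add_smul a b e)

def cornerAlg {e : A} (he : IsIdempotentElem e) : Algebra ℂ he.Corner :=
  (cornerHom he).toAlgebra' (by
    rintro c ⟨x, hx⟩
    have hx' := (Subsemigroup.mem_corner_iff he).1 hx
    apply Subtype.ext
    change (c • e) * x = x * (c • e)
    rw [smul_mul_assoc, mul_smul_comm, hx'.1, hx'.2])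

attribute [local instance] cornerAlg

def cornerVal {e : A} (he : IsIdempotentElem e) : he.Corner →ₗ[ℂ] A where
  toFun x := x.1
  map_add' _ _ := rfl
  map_smul' c x := by
    have hx' := (Subsemigroup.mem_corner_iff he).1 x.2
    change (c • e) * x.1 = c • x.1
    rw [smul_mul_assoc, hx'.1]

def cornerMk {e : A} (he : IsIdempotentElem e) (x : A) : he.Corner := ⟨e * x * e, x, rfl⟩

theorem cornerVal_mk {e : A} (he : IsIdempotentElem e) (x : A) :
    cornerVal he (cornerMk he x) = e * x * e := rfl

theorem cornerVal_mul {e : A} (he : IsIdempotentElem e) (x y : he.Corner) :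
    cornerVal he (x * y) = cornerVal he x * cornerVal he y := rfl

theorem cornerVal_one {e : A} (he : IsIdempotentElem e) :
    cornerVal he 1 = e := rfl

theorem cornerVal_inj {e : A} (he : IsIdempotentElem e) {x y : he.Corner}
    (h : cornerVal he x = cornerVal he y) : x = y := Subtype.ext h

theorem exists_hom (q t : ℂ) {e : A} (he : IsIdempotentElem e) (v : AGen → A)
    (hv : ∀ g, e * v g = v g ∧ v g * e = v g)
    (h : (v .P2 * v .P2i = e ∧ v .P2i * v .P2 = e ∧ v .Q2 * v .Q2i = e ∧ v .Q2i * v .Q2 = e ∧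
     v .P2 * v .P1 = v .P1 * v .P2 ∧
     v .Q2 * v .Q1 = v .Q1 * v .Q2 ∧
     v .P2 * v .Q2 = (q⁻¹ ^ 4) • (v .Q2 * v .P2) ∧
     v .P2 * v .Q1 = (q⁻¹ ^ 2) • (v .Q1 * v .P2) ∧
     v .P1 * v .Q2 = (q⁻¹ ^ 2) • (v .Q2 * v .P1) ∧
     v .P1 * v .Q1 = v .Q1 * v .P1 + (q⁻¹ ^ 2 - 1) • v .R ∧
     v .P2 * v .R = (q⁻¹ ^ 2) • (v .R * v .P2) ∧
     v .R * v .Q2 = (q⁻¹ ^ 2) • (v .Q2 * v .R) ∧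
     v .P1 * v .R = (q⁻¹ ^ 2) • (v .R * v .P1) + (1 - q⁻¹ ^ 2) • (v .Q1 * v .P2) ∧
     v .R * v .Q1 = (q⁻¹ ^ 2) • (v .Q1 * v .R) + (1 - q⁻¹ ^ 2) • (v .Q2 * v .P1) ∧
     v .R * v .R = ((1 + t ^ 2) * (q⁻¹ ^ 2 + t⁻¹ ^ 2)) • (v .Q2 * v .P2)
         - (q⁻¹ ^ 2) • (v .Q2 * v .P1 * v .P1)
         - (q⁻¹ ^ 2) • (v .Q1 * v .Q1 * v .P2)
         + (q⁻¹ ^ 2) • (v .Q1 * v .R * v .P1))) :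
    ∃ Φ : AlgA q t →ₗ[ℂ] A,
      (∀ x y : AlgA q t, Φ (x * y) = Φ x * Φ y) ∧ Φ 1 = e ∧
      ∀ g, Φ (RingQuot.mkAlgHom ℂ (ARel q t) (gA g)) = v g := by
  let w : AGen → he.Corner := fun g => ⟨v g, (Subsemigroup.mem_corner_iff he).2 (hv g)⟩
  have hw : ∀ g, cornerVal he (w g) = v g := fun _ => rfl
  let F : FA →ₐ[ℂ] he.Corner := FreeAlgebra.lift ℂ w
  have hF : ∀ g, F (gA g) = w g := fun g => FreeAlgebra.lift_ι_apply w g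
  obtain ⟨h1, h2, h3, h4, h5, h6, h7, h8, h9, h10, h11, h12, h13, h14, h15⟩ := h
  have hrel : ∀ ⦃x y⦄, ARel q t x y → F x = F y := by
    intro x y hxy
    apply cornerVal_inj
    cases hxy <;>
      simp only [map_mul, map_add, map_sub, map_smul, map_one, hF, cornerVal_mul, cornerVal_one, hw] <;>
      assumption
  let G : AlgA q t →ₐ[ℂ] he.Corner := RingQuot.liftAlgHom ℂ ⟨F, hrel⟩
  refine ⟨(cornerVal he).comp G.toLinearMap, ?_, ?_, ?_⟩
  · intro x y
    simp only [LinearMap.comp_apply, AlgHom.toLinearMap_apply, map_mul, cornerVal_mul]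
  · simp only [LinearMap.comp_apply, AlgHom.toLinearMap_apply, map_one, cornerVal_one]
  · intro g
    simp only [LinearMap.comp_apply, AlgHom.toLinearMap_apply]
    change cornerVal he (RingQuot.liftAlgHom ℂ ⟨F, hrel⟩ _) = _
    rw [RingQuot.liftAlgHom_mkAlgHom_apply, hF, hw]

end corner

theorem dahaBase (q t : ℂ) : Base q t (T q t) (Ti q t) (X1 q t) (X1i q t) (X2 q t) (X2i q t)
    (Y1 q t) (Y1i q t) (Y2 q t) (Y2i q t) (eSym q t) where
  he := rfl
  TTi := by
    simpa only [T, Ti, X1, X1i, X2, X2i, Y1, Y1i, Y2, Y2i, map_mul, map_one, map_smul, map_add, map_sub, map_zero,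
      AlgHom.commutes]
      using RingQuot.mkAlgHom_rel ℂ (DRel.TTi (q := q) (t := t))
  TiT := by
    simpa only [T, Ti, X1, X1i, X2, X2i, Y1, Y1i, Y2, Y2i, map_mul, map_one, map_smul, map_add, map_sub, map_zero,
      AlgHom.commutes]
      using RingQuot.mkAlgHom_rel ℂ (DRel.TiT (q := q) (t := t))
  X1X1i := by
    simpa only [T, Ti, X1, X1i, X2, X2i, Y1, Y1i, Y2, Y2i, map_mul, map_one, map_smul, map_add, map_sub, map_zero,
      AlgHom.commutes]
      using RingQuot.mkAlgHom_rel ℂ (DRel.X1X1i (q := q) (t := t))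
  X1iX1 := by
    simpa only [T, Ti, X1, X1i, X2, X2i, Y1, Y1i, Y2, Y2i, map_mul, map_one, map_smul, map_add, map_sub, map_zero,
      AlgHom.commutes]
      using RingQuot.mkAlgHom_rel ℂ (DRel.X1iX1 (q := q) (t := t))
  X2X2i := by
    simpa only [T, Ti, X1, X1i, X2, X2i, Y1, Y1i, Y2, Y2i, map_mul, map_one, map_smul, map_add, map_sub, map_zero,
      AlgHom.commutes]
      using RingQuot.mkAlgHom_rel ℂ (DRel.X2X2i (q := q) (t := t))
  X2iX2 := by
    simpa only [T, Ti, X1, X1i, X2, X2i, Y1, Y1i, Y2, Y2i, map_mul, map_one, map_smul, map_add, map_sub, map_zero,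
      AlgHom.commutes]
      using RingQuot.mkAlgHom_rel ℂ (DRel.X2iX2 (q := q) (t := t))
  Y1Y1i := by
    simpa only [T, Ti, X1, X1i, X2, X2i, Y1, Y1i, Y2, Y2i, map_mul, map_one, map_smul, map_add, map_sub, map_zero,
      AlgHom.commutes]
      using RingQuot.mkAlgHom_rel ℂ (DRel.Y1Y1i (q := q) (t := t))
  Y1iY1 := by
    simpa only [T, Ti, X1, X1i, X2, X2i, Y1, Y1i, Y2, Y2i, map_mul, map_one, map_smul, map_add, map_sub, map_zero,
      AlgHom.commutes]
      using RingQuot.mkAlgHom_rel ℂ (DRel.Y1iY1 (q := q) (t := t))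
  Y2Y2i := by
    simpa only [T, Ti, X1, X1i, X2, X2i, Y1, Y1i, Y2, Y2i, map_mul, map_one, map_smul, map_add, map_sub, map_zero,
      AlgHom.commutes]
      using RingQuot.mkAlgHom_rel ℂ (DRel.Y2Y2i (q := q) (t := t))
  Y2iY2 := by
    simpa only [T, Ti, X1, X1i, X2, X2i, Y1, Y1i, Y2, Y2i, map_mul, map_one, map_smul, map_add, map_sub, map_zero,
      AlgHom.commutes]
      using RingQuot.mkAlgHom_rel ℂ (DRel.Y2iY2 (q := q) (t := t))
  TX1T := by
    simpa only [T, Ti, X1, X1i, X2, X2i, Y1, Y1i, Y2, Y2i, map_mul, map_one, map_smul, map_add, map_sub, map_zero,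
      AlgHom.commutes]
      using RingQuot.mkAlgHom_rel ℂ (DRel.TX1T (q := q) (t := t))
  TiY1Ti := by
    simpa only [T, Ti, X1, X1i, X2, X2i, Y1, Y1i, Y2, Y2i, map_mul, map_one, map_smul, map_add, map_sub, map_zero,
      AlgHom.commutes]
      using RingQuot.mkAlgHom_rel ℂ (DRel.TiY1Ti (q := q) (t := t))
  Xcomm := by
    simpa only [T, Ti, X1, X1i, X2, X2i, Y1, Y1i, Y2, Y2i, map_mul, map_one, map_smul, map_add, map_sub, map_zero,
      AlgHom.commutes]
      using RingQuot.mkAlgHom_rel ℂ (DRel.Xcomm (q := q) (t := t))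
  Ycomm := by
    simpa only [T, Ti, X1, X1i, X2, X2i, Y1, Y1i, Y2, Y2i, map_mul, map_one, map_smul, map_add, map_sub, map_zero,
      AlgHom.commutes]
      using RingQuot.mkAlgHom_rel ℂ (DRel.Ycomm (q := q) (t := t))
  YXX := by
    simpa only [T, Ti, X1, X1i, X2, X2i, Y1, Y1i, Y2, Y2i, map_mul, map_one, map_smul, map_add, map_sub, map_zero,
      AlgHom.commutes]
      using RingQuot.mkAlgHom_rel ℂ (DRel.YXX (q := q) (t := t))
  X1iY2 := by
    simpa only [T, Ti, X1, X1i, X2, X2i, Y1, Y1i, Y2, Y2i, map_mul, map_one, map_smul, map_add, map_sub, map_zero,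
      AlgHom.commutes]
      using RingQuot.mkAlgHom_rel ℂ (DRel.X1iY2 (q := q) (t := t))
  hecke := by
    simpa only [T, Ti, X1, X1i, X2, X2i, Y1, Y1i, Y2, Y2i, map_mul, map_one, map_smul, map_add, map_sub, map_zero,
      AlgHom.commutes]
      using RingQuot.mkAlgHom_rel ℂ (DRel.hecke (q := q) (t := t))

/-- The elements `𝑃₁ = e(X₁+X₂)e`, `𝑃₂ = e(X₁X₂)e`, `𝑄₁ = e(Y₁+Y₂)e`,
`𝑄₂ = e(Y₁Y₂)e`, `𝑅 = e(t⁻²Y₁X₁+Y₂X₂)e`, together with `𝑃₂⁻¹ = e(X₁X₂)⁻¹e` and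
`𝑄₂⁻¹ = e(Y₁Y₂)⁻¹e`, satisfy all the defining relations of `𝒜` (with unit `e`);
consequently there is a ℂ-algebra homomorphism `Φ : 𝒜 → eH_{t,q}e` sending
`P₁, P₂, Q₁, Q₂, R` to `𝑃₁, 𝑃₂, 𝑄₁, 𝑄₂, 𝑅` respectively.  (As the unit of
`eH_{t,q}e` is `e`, the homomorphism is formalized as a multiplicative ℂ-linear
map into `H_{t,q}` with `Φ(1) = e`.) -/
theorem stmt6 (q t : ℂ) (hq : q ≠ 0) (ht : t ≠ 0) (ht2 : t ^ 2 ≠ -1) :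
    (sP2 q t * sP2i q t = eSym q t ∧
     sP2i q t * sP2 q t = eSym q t ∧
     sQ2 q t * sQ2i q t = eSym q t ∧
     sQ2i q t * sQ2 q t = eSym q t ∧
     sP2 q t * sP1 q t = sP1 q t * sP2 q t ∧
     sQ2 q t * sQ1 q t = sQ1 q t * sQ2 q t ∧
     sP2 q t * sQ2 q t = (q⁻¹ ^ 4) • (sQ2 q t * sP2 q t) ∧
     sP2 q t * sQ1 q t = (q⁻¹ ^ 2) • (sQ1 q t * sP2 q t) ∧
     sP1 q t * sQ2 q t = (q⁻¹ ^ 2) • (sQ2 q t * sP1 q t) ∧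
     sP1 q t * sQ1 q t = sQ1 q t * sP1 q t + (q⁻¹ ^ 2 - 1) • sR q t ∧
     sP2 q t * sR q t = (q⁻¹ ^ 2) • (sR q t * sP2 q t) ∧
     sR q t * sQ2 q t = (q⁻¹ ^ 2) • (sQ2 q t * sR q t) ∧
     sP1 q t * sR q t
       = (q⁻¹ ^ 2) • (sR q t * sP1 q t) + (1 - q⁻¹ ^ 2) • (sQ1 q t * sP2 q t) ∧
     sR q t * sQ1 q t
       = (q⁻¹ ^ 2) • (sQ1 q t * sR q t) + (1 - q⁻¹ ^ 2) • (sQ2 q t * sP1 q t) ∧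
     sR q t * sR q t
       = ((1 + t ^ 2) * (q⁻¹ ^ 2 + t⁻¹ ^ 2)) • (sQ2 q t * sP2 q t)
         - (q⁻¹ ^ 2) • (sQ2 q t * sP1 q t * sP1 q t)
         - (q⁻¹ ^ 2) • (sQ1 q t * sQ1 q t * sP2 q t)
         + (q⁻¹ ^ 2) • (sQ1 q t * sR q t * sP1 q t)) ∧
    ∃ Φ : AlgA q t →ₗ[ℂ] DAHA q t,
      (∀ x y : AlgA q t, Φ (x * y) = Φ x * Φ y) ∧
      Φ 1 = eSym q t ∧
      Φ (P1 q t) = sP1 q t ∧ Φ (P2 q t) = sP2 q t ∧ Φ (P2i q t) = sP2i q t ∧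
      Φ (Q1 q t) = sQ1 q t ∧ Φ (Q2 q t) = sQ2 q t ∧ Φ (Q2i q t) = sQ2i q t ∧
      Φ (R q t) = sR q t := by
  have hb := dahaBase q t
  have hall := hb.all hq ht ht2 (sP1 q t) (sP2 q t) (sP2i q t) (sQ1 q t) (sQ2 q t) (sQ2i q t)
    (sR q t) rfl rfl rfl rfl rfl rfl rfl
  refine ⟨hall, ?_⟩
  have he : IsIdempotentElem (eSym q t) := hb.ee ht ht2
  have key : ∀ x : DAHA q t, eSym q t * (eSym q t * x * eSym q t) = eSym q t * x * eSym q t ∧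
      eSym q t * x * eSym q t * eSym q t = eSym q t * x * eSym q t := by
    intro x
    constructor
    · rw [← mul_assoc, ← mul_assoc, he.eq]
    · rw [mul_assoc _ (eSym q t), he.eq]
  obtain ⟨Φ, hm, h1, hg⟩ := exists_hom q t he
    (fun g => match g with
      | .P1 => sP1 q t | .P2 => sP2 q t | .P2i => sP2i q t | .Q1 => sQ1 q t
      | .Q2 => sQ2 q t | .Q2i => sQ2i q t | .R => sR q t)
    (by intro g; cases g <;> exact key _) hall
  exact ⟨Φ, hm, h1, hg .P1, hg .P2, hg .P2i, hg .Q1, hg .Q2, hg .Q2i, hg .R⟩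
end
end
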